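/- arXiv:1308.0454 — 3 statements merged into one kernel-verified Lean document; each statement's English description precedes it below -/
import Mathlib

section
/- Let [ξ, ξ'] = {ξ + λe^J : 0 ≤ λ ≤ μ} (with μ > 0) be an ordinary segment of the tropical edge E_K. Then μ is the greatest scalar λ ≥ 0 satisfying: λ ≤ min(λ⁺_i(ξ,J), λ⁻_i(ξ,J)) for all i ∈ B(ξ,J), and λ ≤ λ⁻_i(ξ,J) for all i ∈ Λ(ξ,J) such that λ⁻_i(ξ,J) ≤ λ⁺_i(ξ,J). -/
open scoped Classical

noncomputable section

/-- The tropical semiring `ℝ ∪ {−∞}` with max as addition, + as multiplication. -/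
abbrev TT : Type := WithBot ℝ

/-- Tropical dot product `max_j (a j + x j)`. -/
def tdot {n : ℕ} (a x : Fin n → TT) : TT :=
  Finset.univ.sup fun j => a j + x j

/-- Tropical permanent of a square matrix over `TT`. -/
def tper {q : ℕ} (M : Fin q → Fin q → TT) : TT :=
  Finset.univ.sup fun σ : Equiv.Perm (Fin q) => ∑ i, M i (σ i)

/-- A square tropical matrix is tropically singular. -/
def TropSingular {q : ℕ} (M : Fin q → Fin q → TT) : Prop :=
  tper M = ⊥ ∨ ∃ σ π : Equiv.Perm (Fin q), σ ≠ π ∧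
    (∑ i, M i (σ i)) = tper M ∧ (∑ i, M i (π i)) = tper M

/-- An (unsigned) tropical matrix is tropically generic. -/
def TropGeneric {m n : ℕ} (M : Fin m → Fin n → TT) : Prop :=
  ∀ (q : ℕ) (r : Fin q → Fin m) (c : Fin q → Fin n),
    Function.Injective r → Function.Injective c →
    tper (fun i j => M (r i) (c j)) = ⊥ ∨ ¬ TropSingular (fun i j => M (r i) (c j))

/-- sign of an entry of a signed tropical matrix. -/
def esign (ap an : TT) : ℤ :=
  if ap ≠ ⊥ then 1 else if an ≠ ⊥ then -1 else 0

/-- A signed square tropical matrix (pair of matrices) is tropically sign singular. -/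
def TropSignSingular {q : ℕ} (Mp Mn : Fin q → Fin q → TT) : Prop :=
  tper (fun i j => max (Mp i j) (Mn i j)) = ⊥ ∨
  ∃ σ π : Equiv.Perm (Fin q),
    (∑ i, max (Mp i (σ i)) (Mn i (σ i))) = tper (fun i j => max (Mp i j) (Mn i j)) ∧
    (∑ i, max (Mp i (π i)) (Mn i (π i))) = tper (fun i j => max (Mp i j) (Mn i j)) ∧
    ((Equiv.Perm.sign σ : ℤ) * ∏ i, esign (Mp i (σ i)) (Mn i (σ i)))
      ≠ ((Equiv.Perm.sign π : ℤ) * ∏ i, esign (Mp i (π i)) (Mn i (π i)))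

/-- A signed tropical matrix is tropically sign generic. -/
def TropSignGeneric {m n : ℕ} (Mp Mn : Fin m → Fin n → TT) : Prop :=
  ∀ (q : ℕ) (r : Fin q → Fin m) (c : Fin q → Fin n),
    Function.Injective r → Function.Injective c →
    tper (fun i j => max (Mp (r i) (c j)) (Mn (r i) (c j))) = ⊥ ∨
    ¬ TropSignSingular (fun i j => Mp (r i) (c j)) (fun i j => Mn (r i) (c j))

/-- Tropical polyhedron `P(A,b)` given by a signed matrix/vector. -/
def tropP {m n : ℕ} (Ap An : Fin m → Fin n → TT) (bp bn : Fin m → TT) :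
    Set (Fin n → TT) :=
  {x | ∀ i, max (tdot (An i) x) (bn i) ≤ max (tdot (Ap i) x) (bp i)}


section Tangent

variable {m n : ℕ} (Wp Wn : Fin m → Fin (n + 1) → TT)

/-- Real vector viewed inside `T^{n+1}`. -/
def toT (x : Fin (n + 1) → ℝ) : Fin (n + 1) → TT := fun j => (x j : TT)

/-- Modulus of the signed matrix `W`. -/
def tmod : Fin m → Fin (n + 1) → TT := fun i j => max (Wp i j) (Wn i j)

/-- `i` is a hyperplane node of the tangent graph at `x`. -/
def isHypNode (x : Fin (n + 1) → ℝ) (i : Fin m) : Prop :=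
  tdot (Wp i) (toT x) = tdot (Wn i) (toT x) ∧ ⊥ < tdot (Wp i) (toT x)

/-- There is an edge between hyperplane node `i` and coordinate node `j`
in the tangent graph at `x`. -/
def isTEdge (x : Fin (n + 1) → ℝ) (i : Fin m) (j : Fin (n + 1)) : Prop :=
  isHypNode Wp Wn x i ∧ tmod Wp Wn i j + (x j : TT) = tdot (tmod Wp Wn i) (toT x)

/-- Vertices of the tangent (di)graph: hyperplane nodes on the left,
coordinate nodes on the right. -/
abbrev TGV (m n : ℕ) : Type := Sum (Fin m) (Fin (n + 1))

/-- The (undirected) tangent graph at `x`. -/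
def tangentGraph (x : Fin (n + 1) → ℝ) : SimpleGraph (TGV m n) :=
  SimpleGraph.fromRel fun u v =>
    match u, v with
    | Sum.inl i, Sum.inr j => isTEdge Wp Wn x i j
    | _, _ => False

/-- The arc relation of the tangent digraph at `x`: the edge between `i` and
`j` is directed from `j` to `i` when `W_{ij}` is tropically positive, and from
`i` to `j` when it is tropically negative. -/
def arcRel (x : Fin (n + 1) → ℝ) : TGV m n → TGV m n → Prop := fun u v =>
  match u, v with
  | Sum.inr j, Sum.inl i => isTEdge Wp Wn x i j ∧ Wp i j ≠ ⊥
  | Sum.inl i, Sum.inr j => isTEdge Wp Wn x i j ∧ Wn i j ≠ ⊥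
  | _, _ => False

end Tangent

section Pivot

variable {m n : ℕ}

/-- The tropical cone `C = {x : Wᵢ⁺⊙x ≥ Wᵢ⁻⊙x for all i}`. -/
def coneC (Wp Wn : Fin m → Fin (n + 1) → TT) : Set (Fin (n + 1) → TT) :=
  {x | ∀ i, tdot (Wn i) x ≤ tdot (Wp i) x}

/-- The `i`-th s-hyperplane `Hᵢ`. -/
def hypHS (Wp Wn : Fin m → Fin (n + 1) → TT) (i : Fin m) : Set (Fin (n + 1) → TT) :=
  {x | tdot (Wp i) x = tdot (Wn i) x}

/-- The `i`-th half-space `Hᵢ^≥`. -/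
def halfHS (Wp Wn : Fin m → Fin (n + 1) → TT) (i : Fin m) : Set (Fin (n + 1) → TT) :=
  {x | tdot (Wn i) x ≤ tdot (Wp i) x}

/-- The tropical edge `E_K = ⋂_{i ∈ K} Hᵢ ∩ C` (as a set). -/
def edgeEK (Wp Wn : Fin m → Fin (n + 1) → TT) (K : Finset (Fin m)) :
    Set (Fin (n + 1) → TT) :=
  {x | (∀ i ∈ K, x ∈ hypHS Wp Wn i) ∧ x ∈ coneC Wp Wn}

/-- Indicator vector `e^J` of `J ⊆ [n+1]`. -/
def eJ (J : Finset (Fin (n + 1))) : Fin (n + 1) → ℝ := fun j => if j ∈ J then 1 else 0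

/-- `e^J` (with `∅ ⊊ J ⊊ [n+1]`) is a feasible direction from `x` in `D`. -/
def Feasible (D : Set (Fin (n + 1) → TT)) (x : Fin (n + 1) → ℝ)
    (J : Finset (Fin (n + 1))) : Prop :=
  J ≠ ∅ ∧ J ≠ Finset.univ ∧
    ∃ μ : ℝ, 0 < μ ∧ ∀ lam : ℝ, 0 ≤ lam → lam ≤ μ → toT (x + lam • eJ J) ∈ D

/-- `{ξ + λ e^J : 0 ≤ λ ≤ μ}` is an ordinary segment of the tropical edge
`E_K`: it is contained in `E_K` and is maximal in the direction `e^J`. -/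
def IsOrdSeg (Wp Wn : Fin m → Fin (n + 1) → TT) (K : Finset (Fin m))
    (ξ : Fin (n + 1) → ℝ) (J : Finset (Fin (n + 1))) (μ : ℝ) : Prop :=
  0 < μ ∧ J ≠ ∅ ∧ J ≠ Finset.univ ∧
  (∀ lam : ℝ, 0 ≤ lam → lam ≤ μ → toT (ξ + lam • eJ J) ∈ edgeEK Wp Wn K) ∧
  (∀ ε : ℝ, 0 < ε → toT (ξ - ε • eJ J) ∉ edgeEK Wp Wn K) ∧
  (∀ ε : ℝ, 0 < ε → toT (ξ + (μ + ε) • eJ J) ∉ edgeEK Wp Wn K)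

/-- `x` is a breakpoint of `E_K`: an intermediate endpoint shared by two
consecutive ordinary segments. -/
def IsBreakpoint (Wp Wn : Fin m → Fin (n + 1) → TT) (K : Finset (Fin m))
    (x : Fin (n + 1) → ℝ) : Prop :=
  ∃ ξ J μ, IsOrdSeg Wp Wn K ξ J μ ∧ x = ξ + μ • eJ J ∧
    ∃ J' μ', IsOrdSeg Wp Wn K x J' μ' ∧ J ⊂ J'

/-- `x` lies in the relative interior of an ordinary segment of `E_K`. -/
def InRelIntSeg (Wp Wn : Fin m → Fin (n + 1) → TT) (K : Finset (Fin m))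
    (x : Fin (n + 1) → ℝ) : Prop :=
  ∃ ξ J μ, IsOrdSeg Wp Wn K ξ J μ ∧ ∃ lam : ℝ, 0 < lam ∧ lam < μ ∧ x = ξ + lam • eJ J

/-- Embedding of `TT = ℝ ∪ {−∞}` into `EReal`. -/
def tE : TT → EReal := WithBot.recBotCoe ⊥ (fun r => (r : EReal))

/-- `λ⁺_i(ξ,J) = (Wᵢ⁺⊙ξ) − max_{j∈J}(W⁺_{ij} + ξ_j)`, with `−(−∞) = +∞`. -/
def lamP (Wp : Fin m → Fin (n + 1) → TT) (i : Fin m) (ξ : Fin (n + 1) → ℝ)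
    (J : Finset (Fin (n + 1))) : EReal :=
  tE (tdot (Wp i) (toT ξ)) - tE (J.sup fun j => Wp i j + (ξ j : TT))

/-- `λ⁻_i(ξ,J) = (Wᵢ⁺⊙ξ) − max_{j∈J}(W⁻_{ij} + ξ_j)`, with `−(−∞) = +∞`. -/
def lamM (Wp Wn : Fin m → Fin (n + 1) → TT) (i : Fin m) (ξ : Fin (n + 1) → ℝ)
    (J : Finset (Fin (n + 1))) : EReal :=
  tE (tdot (Wp i) (toT ξ)) - tE (J.sup fun j => Wn i j + (ξ j : TT))

/-- `argmax(Wᵢ⁺⊙ξ)`. -/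
def argmaxP (Wp : Fin m → Fin (n + 1) → TT) (i : Fin m) (ξ : Fin (n + 1) → ℝ) :
    Set (Fin (n + 1)) :=
  {j | Wp i j + (ξ j : TT) = tdot (Wp i) (toT ξ)}

/-- `argmax(Wᵢ⁻⊙ξ)`. -/
def argmaxM (Wn : Fin m → Fin (n + 1) → TT) (i : Fin m) (ξ : Fin (n + 1) → ℝ) :
    Set (Fin (n + 1)) :=
  {j | Wn i j + (ξ j : TT) = tdot (Wn i) (toT ξ)}

/-- `Λ(ξ,J)`: candidate entering constraints. -/
def entSet (Wp : Fin m → Fin (n + 1) → TT) (K : Finset (Fin m))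
    (ξ : Fin (n + 1) → ℝ) (J : Finset (Fin (n + 1))) : Set (Fin m) :=
  {i | i ∉ K ∧ ∀ j ∈ J, j ∉ argmaxP Wp i ξ}

/-- `B(ξ,J)`: candidate breakpoint constraints. -/
def brkSet (Wp Wn : Fin m → Fin (n + 1) → TT) (K : Finset (Fin m))
    (ξ : Fin (n + 1) → ℝ) (J : Finset (Fin (n + 1))) : Set (Fin m) :=
  {i | i ∈ K ∧ (∀ j ∈ J, j ∉ argmaxP Wp i ξ) ∧ ∀ j ∈ J, j ∉ argmaxM Wn i ξ}

/-- Coordinate nodes with an arc into hyperplane node `i`. -/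
def degIn (Wp Wn : Fin m → Fin (n + 1) → TT) (x : Fin (n + 1) → ℝ) (i : Fin m) :
    Set (Fin (n + 1)) :=
  {j | arcRel Wp Wn x (Sum.inr j) (Sum.inl i)}

/-- Coordinate nodes with an arc out of hyperplane node `i`. -/
def degOut (Wp Wn : Fin m → Fin (n + 1) → TT) (x : Fin (n + 1) → ℝ) (i : Fin m) :
    Set (Fin (n + 1)) :=
  {j | arcRel Wp Wn x (Sum.inl i) (Sum.inr j)}

/-- Hyperplane node `i` has degree `(1,1)` in the tangent digraph at `x`. -/
def deg11 (Wp Wn : Fin m → Fin (n + 1) → TT) (x : Fin (n + 1) → ℝ) (i : Fin m) : Prop :=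
  (∃! j, j ∈ degIn Wp Wn x i) ∧ (∃! j, j ∈ degOut Wp Wn x i)

/-- Hyperplane node `i` has degree `(2,1)`. -/
def deg21 (Wp Wn : Fin m → Fin (n + 1) → TT) (x : Fin (n + 1) → ℝ) (i : Fin m) : Prop :=
  (degIn Wp Wn x i).ncard = 2 ∧ (∃! j, j ∈ degOut Wp Wn x i)

/-- Hyperplane node `i` has degree `(1,2)`. -/
def deg12 (Wp Wn : Fin m → Fin (n + 1) → TT) (x : Fin (n + 1) → ℝ) (i : Fin m) : Prop :=
  (∃! j, j ∈ degIn Wp Wn x i) ∧ (degOut Wp Wn x i).ncard = 2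

/-- The support of the tangent graph at `x`: all coordinate nodes together
with the hyperplane nodes. -/
def suppV (Wp Wn : Fin m → Fin (n + 1) → TT) (x : Fin (n + 1) → ℝ) : Set (TGV m n) :=
  {v | match v with
       | Sum.inl i => isHypNode Wp Wn x i
       | Sum.inr _ => True}

/-- The underlying undirected edge relation of the tangent graph. -/
def tedgeRel (Wp Wn : Fin m → Fin (n + 1) → TT) (x : Fin (n + 1) → ℝ) :
    TGV m n → TGV m n → Prop := fun u v =>
  match u, v with
  | Sum.inl i, Sum.inr j => isTEdge Wp Wn x i j
  | _, _ => False

/-- The tangent graph with the hyperplane node `ℓ` (and its incident edges)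
deleted. -/
def delNode (Wp Wn : Fin m → Fin (n + 1) → TT) (x : Fin (n + 1) → ℝ) (ℓ : Fin m) :
    SimpleGraph (TGV m n) :=
  SimpleGraph.fromRel fun u v =>
    tedgeRel Wp Wn x u v ∧ u ≠ Sum.inl ℓ ∧ v ≠ Sum.inl ℓ

/-- The tangent graph with the edge between hyperplane node `k` and coordinate
node `j` deleted. -/
def delEdge (Wp Wn : Fin m → Fin (n + 1) → TT) (x : Fin (n + 1) → ℝ) (k : Fin m)
    (j : Fin (n + 1)) : SimpleGraph (TGV m n) :=
  SimpleGraph.fromRel fun u v =>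
    tedgeRel Wp Wn x u v ∧ ¬(u = Sum.inl k ∧ v = Sum.inr j)

/-- Coordinate nodes weakly connected to hyperplane node `k` after deleting the
edge between `k` and `j`. -/
def reachJ (Wp Wn : Fin m → Fin (n + 1) → TT) (x : Fin (n + 1) → ℝ) (k : Fin m)
    (j : Fin (n + 1)) : Finset (Fin (n + 1)) :=
  Finset.univ.filter fun l => (delEdge Wp Wn x k j).Reachable (Sum.inl k) (Sum.inr l)

end Pivot


theorem comb_two {α β : Type} [DecidableEq α] [DecidableEq β] (E : Finset (α × β)) (hne : E.Nonempty)
    (hc : (E.image Prod.fst).card + (E.image Prod.snd).card ≤ E.card) :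
    ∃ F ⊆ E, F.Nonempty ∧ (∀ i ∈ F.image Prod.fst, (F.filter (fun e => e.1 = i)).card = 2) ∧
      (∀ j ∈ F.image Prod.snd, (F.filter (fun e => e.2 = j)).card = 2) := by
  obtain ⟨F, hF, hmin⟩ := Finset.exists_min_image
    (E.powerset.filter fun F => F.Nonempty ∧
      (F.image Prod.fst).card + (F.image Prod.snd).card ≤ F.card) Finset.card
    ⟨E, by simp [hne, hc]⟩
  simp only [Finset.mem_filter, Finset.mem_powerset] at hF hmin
  obtain ⟨hFE, hFne, hFc⟩ := hF
  have h1 : 1 ≤ (F.image Prod.fst).card := Finset.card_pos.mpr (hFne.image _)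
  have h2 : 1 ≤ (F.image Prod.snd).card := Finset.card_pos.mpr (hFne.image _)
  have herase : ∀ e ∈ F, ¬ (((F.erase e).image Prod.fst).card + ((F.erase e).image Prod.snd).card
      ≤ F.card - 1) := by
    intro e he hle
    have hcard := Finset.card_erase_of_mem he
    have := hmin (F.erase e) ⟨(Finset.erase_subset _ _).trans hFE,
      Finset.card_pos.mp (by omega), by omega⟩
    omega
  have hi1 : ∀ e, ((F.erase e).image Prod.fst).card ≤ (F.image Prod.fst).card := fun e =>
    Finset.card_le_card (Finset.image_subset_image (Finset.erase_subset _ _))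
  have hi2 : ∀ e, ((F.erase e).image Prod.snd).card ≤ (F.image Prod.snd).card := fun e =>
    Finset.card_le_card (Finset.image_subset_image (Finset.erase_subset _ _))
  have heq : F.card = (F.image Prod.fst).card + (F.image Prod.snd).card := by
    obtain ⟨e, he⟩ := hFne
    have := herase e he
    have := hi1 e
    have := hi2 e
    omega
  have d1 : ∀ i ∈ F.image Prod.fst, 2 ≤ (F.filter (fun e => e.1 = i)).card := by
    intro i hi
    obtain ⟨e, he, rfl⟩ := Finset.mem_image.mp hi
    by_contra hlt
    have hle : (F.filter (fun e' => e'.1 = e.1)).card ≤ 1 := by omega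
    rw [Finset.card_le_one] at hle
    apply herase e he
    have : (F.erase e).image Prod.fst ⊂ F.image Prod.fst := by
      rw [Finset.ssubset_iff_of_subset (Finset.image_subset_image (Finset.erase_subset _ _))]
      refine ⟨e.1, hi, ?_⟩
      intro hmem
      obtain ⟨e', he', hee⟩ := Finset.mem_image.mp hmem
      rw [Finset.mem_erase] at he'
      exact he'.1 (hle _ (by simp [he'.2, hee]) _ (by simp [he]))
    have := Finset.card_lt_card this
    have := hi2 e
    omega
  have d2 : ∀ i ∈ F.image Prod.snd, 2 ≤ (F.filter (fun e => e.2 = i)).card := by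
    intro i hi
    obtain ⟨e, he, rfl⟩ := Finset.mem_image.mp hi
    by_contra hlt
    have hle : (F.filter (fun e' => e'.2 = e.2)).card ≤ 1 := by omega
    rw [Finset.card_le_one] at hle
    apply herase e he
    have : (F.erase e).image Prod.snd ⊂ F.image Prod.snd := by
      rw [Finset.ssubset_iff_of_subset (Finset.image_subset_image (Finset.erase_subset _ _))]
      refine ⟨e.2, hi, ?_⟩
      intro hmem
      obtain ⟨e', he', hee⟩ := Finset.mem_image.mp hmem
      rw [Finset.mem_erase] at he'
      exact he'.1 (hle _ (by simp [he'.2, hee]) _ (by simp [he]))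
    have := Finset.card_lt_card this
    have := hi1 e
    omega
  have s1 : F.card = ∑ i ∈ F.image Prod.fst, (F.filter (fun e => e.1 = i)).card :=
    Finset.card_eq_sum_card_image _ _
  have s2 : F.card = ∑ i ∈ F.image Prod.snd, (F.filter (fun e => e.2 = i)).card :=
    Finset.card_eq_sum_card_image _ _
  have t1 := Finset.sum_le_sum d1
  have t2 := Finset.sum_le_sum d2
  have c1 : ∑ i ∈ F.image Prod.fst, 2 = (F.image Prod.fst).card * 2 := by simp
  have c2 : ∑ i ∈ F.image Prod.snd, 2 = (F.image Prod.snd).card * 2 := by simp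
  refine ⟨F, hFE, hFne, ?_, ?_⟩
  · have := (Finset.sum_eq_sum_iff_of_le d1).mp (by omega)
    exact fun i hi => (this i hi).symm
  · have := (Finset.sum_eq_sum_iff_of_le d2).mp (by omega)
    exact fun i hi => (this i hi).symm

theorem comb_match {α β : Type} [DecidableEq α] [DecidableEq β] (E : Finset (α × β)) (hne : E.Nonempty)
    (hc : (E.image Prod.fst).card + (E.image Prod.snd).card ≤ E.card) :
    ∃ (R : Finset α) (f g : R → β), R.Nonempty ∧ Function.Injective f ∧ Function.Injective g ∧
      (∀ i, ∃ k, f k = g i) ∧ ∀ i, f i ≠ g i ∧ ((i : α), f i) ∈ E ∧ ((i : α), g i) ∈ E := by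
  obtain ⟨F, hFE, hFne, d1, d2⟩ := comb_two E hne hc
  let R := F.image Prod.fst
  let N : R → Finset β := fun i => (F.filter (fun e => e.1 = (i : α))).image Prod.snd
  have hN : ∀ i b, b ∈ N i ↔ ((i : α), b) ∈ F := by
    intro i b
    simp only [N, Finset.mem_image, Finset.mem_filter, Prod.exists]
    constructor
    · rintro ⟨a, b', ⟨h, rfl⟩, rfl⟩; exact h
    · intro h; exact ⟨_, _, ⟨h, rfl⟩, rfl⟩
  have hNc : ∀ i, (N i).card = 2 := by
    intro i
    rw [← d1 i i.2]
    apply Finset.card_image_of_injOn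
    rintro ⟨a, b⟩ h ⟨a', b'⟩ h' hh
    simp at h h' hh
    ext <;> simp [h.2, h'.2, hh]
  have hall : ∀ s : Finset R, s.card ≤ (s.biUnion N).card := by
    intro s
    let Es := F.filter (fun e => ∃ i ∈ s, (i : α) = e.1)
    have e1 : Es.card = s.card * 2 := by
      have : Es = s.biUnion (fun i => F.filter (fun e => e.1 = (i : α))) := by
        ext e
        simp only [Es, Finset.mem_filter, Finset.mem_biUnion]
        constructor
        · rintro ⟨h, i, hi, hie⟩
          exact ⟨i, hi, h, hie.symm⟩
        · rintro ⟨i, hi, h, hie⟩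
          exact ⟨h, i, hi, hie.symm⟩
      rw [this, Finset.card_biUnion]
      · rw [Finset.sum_congr rfl (fun (i : R) _ => d1 (i : α) i.2)]; simp
      · intro i _ j _ hij
        rw [Function.onFun, Finset.disjoint_left]
        intro e he he'
        simp only [Finset.mem_filter] at he he'
        exact hij (Subtype.ext (he.2.symm.trans he'.2))
    have e2 : Es.card ≤ (s.biUnion N).card * 2 := by
      have : Es ⊆ (s.biUnion N).biUnion (fun j => F.filter (fun e => e.2 = j)) := by
        intro e he
        simp only [Es, Finset.mem_filter] at he
        obtain ⟨he, i, hi, hie⟩ := he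
        simp only [Finset.mem_biUnion, Finset.mem_filter]
        refine ⟨e.2, ⟨i, hi, (hN i _).mpr ?_⟩, he, rfl⟩
        rw [hie]; exact he
      refine (Finset.card_le_card this).trans (Finset.card_biUnion_le_card_mul _ _ _ ?_)
      intro j hj
      simp only [Finset.mem_biUnion] at hj
      obtain ⟨i, hi, hij⟩ := hj
      exact (d2 j (Finset.mem_image.mpr ⟨_, (hN i j).mp hij, rfl⟩)).le
    omega
  obtain ⟨f, hf, hfN⟩ := (Finset.all_card_le_biUnion_card_iff_exists_injective N).mp hall
  have hg : ∀ i, ∃ b ∈ N i, b ≠ f i := by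
    intro i
    have : 1 < (N i).card := by rw [hNc]; norm_num
    exact Finset.exists_mem_ne this (f i)
  choose g hgN hgf using hg
  have hcards : R.card = (F.image Prod.snd).card := by
    have s1 : F.card = ∑ i ∈ F.image Prod.fst, (F.filter (fun e => e.1 = i)).card :=
      Finset.card_eq_sum_card_image _ _
    have s2 : F.card = ∑ i ∈ F.image Prod.snd, (F.filter (fun e => e.2 = i)).card :=
      Finset.card_eq_sum_card_image _ _
    rw [Finset.sum_congr rfl d1] at s1
    rw [Finset.sum_congr rfl d2] at s2
    simp at s1 s2
    show (F.image Prod.fst).card = _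
    omega
  have hsurj : ∀ j ∈ F.image Prod.snd, ∃ k, f k = j := by
    have : Finset.univ.image f = F.image Prod.snd := by
      apply Finset.eq_of_subset_of_card_le
      · intro j hj
        obtain ⟨i, -, rfl⟩ := Finset.mem_image.mp hj
        exact Finset.mem_image.mpr ⟨_, (hN i _).mp (hfN i), rfl⟩
      · rw [Finset.card_image_of_injective _ hf, ← hcards]; simp
    intro j hj
    rw [← this] at hj
    simpa using hj
  have hgV : ∀ i, g i ∈ F.image Prod.snd := fun i =>
    Finset.mem_image.mpr ⟨_, (hN i _).mp (hgN i), rfl⟩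
  refine ⟨R, f, g, hFne.image _, hf, ?_, fun i => hsurj _ (hgV i), fun i =>
    ⟨(hgf i).symm, hFE ((hN i _).mp (hfN i)), hFE ((hN i _).mp (hgN i))⟩⟩
  intro i i' hii
  by_contra hne'
  obtain ⟨k, hk⟩ := hsurj _ (hgV i)
  have hki : k ≠ i := by rintro rfl; exact hgf _ hk.symm
  have hki' : k ≠ i' := by rintro rfl; exact hgf _ (hk.trans hii).symm
  have hsub : ({((i : α), g i), ((i' : α), g i), ((k : α), g i)} : Finset (α × β)) ⊆
      F.filter (fun e => e.2 = g i) := by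
    intro e he
    simp only [Finset.mem_insert, Finset.mem_singleton] at he
    rw [Finset.mem_filter]
    rcases he with rfl | rfl | rfl
    · exact ⟨(hN i _).mp (hgN i), rfl⟩
    · exact ⟨(hN i' _).mp (hii ▸ hgN i'), rfl⟩
    · exact ⟨(hN k _).mp (hk ▸ hfN k), rfl⟩
  have := Finset.card_le_card hsub
  rw [d2 _ (hgV i), Finset.card_eq_three.mpr ⟨_, _, _, ?_, ?_, ?_, rfl⟩] at this
  · omega
  · exact fun h => hne' (Subtype.ext (congrArg Prod.fst h))
  · exact fun h => hki (Subtype.ext (congrArg Prod.fst h).symm)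
  · exact fun h => hki' (Subtype.ext (congrArg Prod.fst h).symm)

theorem generic_lt {m N : ℕ} (M : Fin m → Fin N → TT) (hgen : TropGeneric M) (y : Fin N → ℝ)
    (E : Finset (Fin m × Fin N)) (hne : E.Nonempty)
    (hE : ∀ e ∈ E, M e.1 e.2 ≠ ⊥ ∧ ∀ k, M e.1 k + (y k : TT) ≤ M e.1 e.2 + (y e.2 : TT)) :
    E.card < (E.image Prod.fst).card + (E.image Prod.snd).card := by
  by_contra hlt
  obtain ⟨R, f, g, hR, hf, hg, hfg, hE'⟩ := comb_match E hne (by omega)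
  let r := R.equivFin.symm
  choose k hk using hfg
  have hkinj : Function.Injective k := by
    intro a b hab
    apply hg
    rw [← hk, ← hk, hab]
  let τ : Equiv.Perm (Fin R.card) :=
    Equiv.ofBijective (fun a => R.equivFin (k (r a)))
      (Finite.injective_iff_bijective.mp (R.equivFin.injective.comp (hkinj.comp r.injective)))
  have hτ : ∀ a, f (r (τ a)) = g (r a) := by
    intro a
    simp [τ, r, hk]
  have ht : ∀ a : Fin R.card, ∃ t : ℝ, M (r a) (f (r a)) = (t : TT) := by
    intro a
    obtain ⟨t, ht⟩ := WithBot.ne_bot_iff_exists.mp (hE _ (hE' (r a)).2.1).1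
    exact ⟨t, ht.symm⟩
  choose t ht using ht
  have hle : ∀ a b, M (r a) (f (r b)) ≤ ((t a + y (f (r a)) - y (f (r b)) : ℝ) : TT) := by
    intro a b
    have := (hE _ (hE' (r a)).2.1).2 (f (r b))
    simp only [ht] at this
    generalize M (r a) (f (r b)) = z at this
    induction z using WithBot.recBotCoe with
    | bot => simp
    | coe z => norm_cast at this ⊢; linarith
  have hτe : ∀ a, M (r a) (f (r (τ a))) = ((t a + y (f (r a)) - y (f (r (τ a))) : ℝ) : TT) := by
    intro a
    apply le_antisymm (hle _ _)
    have h1 := (hE _ (hE' (r a)).2.2)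
    have := h1.2 (f (r a))
    rw [hτ]
    simp only [ht] at this
    generalize M (r a) (g (r a)) = z at this
    induction z using WithBot.recBotCoe with
    | bot => simp at this
    | coe z => norm_cast at this ⊢; linarith
  have hcoe : ∀ h : Fin R.card → ℝ, ∑ a, ((h a : ℝ) : TT) = ((∑ a, h a : ℝ) : TT) := by
    intro h
    exact (map_sum (WithBot.addHom : ℝ →+ WithBot ℝ) h Finset.univ).symm
  have hsum : ∀ ρ : Equiv.Perm (Fin R.card),
      ∑ a, ((t a + y (f (r a)) - y (f (r (ρ a))) : ℝ) : TT) = ((∑ a, t a : ℝ) : TT) := by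
    intro ρ
    rw [hcoe, Finset.sum_sub_distrib, Finset.sum_add_distrib,
      Equiv.sum_comp ρ (fun a => y (f (r a)))]
    simp
  have h1 : ∑ a, M (r a) (f (r ((1 : Equiv.Perm (Fin R.card)) a))) = ((∑ a, t a : ℝ) : TT) := by
    rw [← hcoe]
    exact Finset.sum_congr rfl (fun a _ => ht a)
  have h2 : ∑ a, M (r a) (f (r (τ a))) = ((∑ a, t a : ℝ) : TT) := by
    rw [← hsum τ]
    exact Finset.sum_congr rfl (fun a _ => hτe a)
  have hper : tper (fun a b => M (r a) (f (r b))) = ((∑ a, t a : ℝ) : TT) := by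
    apply le_antisymm
    · apply Finset.sup_le
      intro ρ _
      rw [← hsum ρ]
      exact Finset.sum_le_sum (fun a _ => hle _ _)
    · rw [← h1]
      exact Finset.le_sup (f := fun ρ : Equiv.Perm (Fin R.card) => ∑ a, M (r a) (f (r (ρ a))))
        (Finset.mem_univ 1)
  rcases hgen R.card (fun a => r a) (fun b => f (r b))
    (Subtype.val_injective.comp r.injective) (hf.comp r.injective) with h | h
  · rw [hper] at h; exact WithBot.coe_ne_bot h
  · apply h
    right
    refine ⟨1, τ, ?_, h1.trans hper.symm, h2.trans hper.symm⟩
    intro heq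
    obtain ⟨i, hi⟩ := hR
    have := hτ (R.equivFin ⟨i, hi⟩)
    rw [← heq] at this
    exact (hE' _).1 this

theorem generic_sum {m N : ℕ} (hN : 0 < N) (M : Fin m → Fin N → TT) (hgen : TropGeneric M)
    (y : Fin N → ℝ)
    (R : Finset (Fin m)) (A : Fin m → Finset (Fin N))
    (hA : ∀ i ∈ R, ∀ j ∈ A i, M i j ≠ ⊥ ∧ ∀ k, M i k + (y k : TT) ≤ M i j + (y j : TT)) :
    ∑ i ∈ R, (A i).card < R.card + N := by
  let E := (R ×ˢ (Finset.univ : Finset (Fin N))).filter (fun e => e.2 ∈ A e.1)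
  have hcard : E.card = ∑ i ∈ R, (A i).card := by
    rw [Finset.card_eq_sum_card_fiberwise (f := Prod.fst) (t := R)]
    · apply Finset.sum_congr rfl
      intro i hi
      have : E.filter (fun e => e.1 = i) = (A i).image (fun j => (i, j)) := by
        ext ⟨a, b⟩
        simp only [E, Finset.mem_filter, Finset.mem_product, Finset.mem_image, Finset.mem_univ,
          Prod.mk.injEq]
        grind
      rw [this, Finset.card_image_of_injective]
      intro a b h
      simpa using h
    · intro e he
      simp [E] at he
      exact he.1
  rw [← hcard]
  rcases E.eq_empty_or_nonempty with h | h
  · rw [h]; simp; omega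
  · refine (generic_lt M hgen y E h ?_).trans_le (add_le_add ?_ ?_)
    · rintro ⟨i, j⟩ he
      simp only [E, Finset.mem_filter, Finset.mem_product] at he
      exact hA i he.1.1 j he.2
    · apply Finset.card_le_card
      intro i hi
      simp [E] at hi
      exact hi.1
    · simpa using Finset.card_le_univ (E.image Prod.snd)

theorem sup_attained {ι : Type} (J : Finset ι) (f : ι → TT) (h : J.sup f ≠ ⊥) :
    ∃ j ∈ J, f j = J.sup f := by
  have hJ : J.Nonempty := by
    rw [Finset.nonempty_iff_ne_empty]
    rintro rfl
    simp at h
  obtain ⟨j, hj, he⟩ := Finset.exists_mem_eq_sup J hJ f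
  exact ⟨j, hj, he.symm⟩

theorem tdot_shift {n : ℕ} (a : Fin (n + 1) → TT) (ξ : Fin (n + 1) → ℝ)
    (J : Finset (Fin (n + 1))) (l : ℝ) :
    tdot a (toT (ξ + l • eJ J)) =
      max (Jᶜ.sup fun j => a j + (ξ j : TT)) ((J.sup fun j => a j + (ξ j : TT)) + (l : TT)) := by
  have hin : ∀ j ∈ J, a j + toT (ξ + l • eJ J) j = a j + (ξ j : TT) + (l : TT) := by
    intro j hj
    simp [toT, eJ, hj, add_assoc]
  have hout : ∀ j ∉ J, a j + toT (ξ + l • eJ J) j = a j + (ξ j : TT) := by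
    intro j hj
    simp [toT, eJ, hj]
  apply le_antisymm
  · apply Finset.sup_le
    intro j _
    by_cases hj : j ∈ J
    · rw [hin j hj]
      apply le_max_of_le_right
      gcongr
      exact Finset.le_sup (f := fun j => a j + (ξ j : TT)) hj
    · rw [hout j hj]
      apply le_max_of_le_left
      exact Finset.le_sup (f := fun j => a j + (ξ j : TT)) (Finset.mem_compl.mpr hj)
  · apply max_le
    · apply Finset.sup_le
      intro j hj
      rw [← hout j (Finset.mem_compl.mp hj)]
      exact Finset.le_sup (f := fun j => a j + toT (ξ + l • eJ J) j) (Finset.mem_univ j)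
    · by_cases h : (J.sup fun j => a j + (ξ j : TT)) = ⊥
      · rw [h]; simp
      · obtain ⟨j, hj, he⟩ := sup_attained J _ h
        rw [← he, ← hin j hj]
        exact Finset.le_sup (f := fun j => a j + toT (ξ + l • eJ J) j) (Finset.mem_univ j)

theorem tdot_split {n : ℕ} (a : Fin (n + 1) → TT) (ξ : Fin (n + 1) → ℝ)
    (J : Finset (Fin (n + 1))) :
    tdot a (toT ξ) =
      max (Jᶜ.sup fun j => a j + (ξ j : TT)) (J.sup fun j => a j + (ξ j : TT)) := by
  have := tdot_shift a ξ J 0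
  simpa using this

theorem tE_sub_le (p s : TT) (l : ℝ) (hp : p ≠ ⊥) :
    ((l : ℝ) : EReal) ≤ tE p - tE s ↔ s + (l : TT) ≤ p := by
  induction p using WithBot.recBotCoe with
  | bot => exact absurd rfl hp
  | coe p =>
    induction s using WithBot.recBotCoe with
    | bot => simp [tE]
    | coe s =>
      simp only [tE, WithBot.recBotCoe_coe]
      norm_cast
      constructor <;> intro h <;> linarith

theorem tE_sub_mono (p s t : TT) (hp : p ≠ ⊥) (h : tE p - tE s ≤ tE p - tE t) : t ≤ s := by
  induction p using WithBot.recBotCoe with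
  | bot => exact absurd rfl hp
  | coe p =>
    induction t using WithBot.recBotCoe with
    | bot => simp
    | coe t =>
      induction s using WithBot.recBotCoe with
      | bot => simp [tE] at h; exact absurd h (by rw [← EReal.coe_sub]; exact EReal.coe_ne_top _)
      | coe s =>
        simp only [tE, WithBot.recBotCoe_coe] at h
        norm_cast at h ⊢
        linarith

/-- Elements attaining the max in row `i`. -/
theorem deg_mem {n : ℕ} (a b : Fin (n + 1) → TT) (x : Fin (n + 1) → ℝ) (s : ℝ)
    (ha : tdot a (toT x) ≤ (s : TT)) (hb : tdot b (toT x) ≤ (s : TT)) (j : Fin (n + 1))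
    (hj : a j + (x j : TT) = s ∨ b j + (x j : TT) = s) :
    max (a j) (b j) ≠ ⊥ ∧ ∀ k, max (a k) (b k) + (x k : TT) ≤ max (a j) (b j) + (x j : TT) := by
  have hle : (s : TT) ≤ max (a j) (b j) + (x j : TT) := by
    rcases hj with h | h
    · rw [← h]; gcongr; exact le_max_left _ _
    · rw [← h]; gcongr; exact le_max_right _ _
  constructor
  · intro h
    rw [h] at hle
    simp at hle
  · intro k
    refine le_trans ?_ hle
    rcases max_choice (a k) (b k) with h | h <;> rw [h]
    · exact (Finset.le_sup (f := fun k => a k + toT x k) (Finset.mem_univ k)).trans ha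
    · exact (Finset.le_sup (f := fun k => b k + toT x k) (Finset.mem_univ k)).trans hb

theorem sign_excl {n : ℕ} (a b : Fin (n + 1) → TT) (hs : ∀ j, min (a j) (b j) = ⊥)
    (x : Fin (n + 1) → ℝ) (s : ℝ) (j k : Fin (n + 1))
    (hj : a j + (x j : TT) = s) (hk : b k + (x k : TT) = s) : j ≠ k := by
  rintro rfl
  rcases min_eq_bot.mp (hs j) with h | h
  · rw [h] at hj; simp at hj
  · rw [h] at hk; simp at hk

theorem row_ne_bot {n : ℕ} (a b : Fin (n + 1) → TT) (hr : ∃ j, max (a j) (b j) ≠ ⊥)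
    (x : Fin (n + 1) → ℝ) (h : tdot b (toT x) ≤ tdot a (toT x)) : tdot a (toT x) ≠ ⊥ := by
  intro h0
  obtain ⟨j, hj⟩ := hr
  rw [h0] at h
  have h1 : a j + toT x j ≤ ⊥ := h0 ▸ Finset.le_sup (f := fun k => a k + toT x k) (Finset.mem_univ j)
  have h2 : b j + toT x j ≤ ⊥ :=
    (Finset.le_sup (f := fun k => b k + toT x k) (Finset.mem_univ j)).trans h
  simp [toT] at h1 h2
  simp [h1, h2] at hj

/-- Every row of `K` has at least two maximal entries; the excess is bounded. -/
theorem no_excess {m n : ℕ} (Wp Wn : Fin m → Fin (n + 1) → TT)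
    (hsign : ∀ i j, min (Wp i j) (Wn i j) = ⊥)
    (hrow : ∀ i, ∃ j, max (Wp i j) (Wn i j) ≠ ⊥)
    (hgen : TropGeneric (tmod Wp Wn))
    (R : Finset (Fin m)) (x : Fin (n + 1) → ℝ)
    (hR : ∀ i ∈ R, tdot (Wp i) (toT x) = tdot (Wn i) (toT x))
    (i : Fin m) (hi : i ∈ R) (D : Finset (Fin (n + 1))) (s : ℝ)
    (hs : tdot (Wp i) (toT x) ≤ (s : TT))
    (hD : ∀ j ∈ D, Wp i j + (x j : TT) = s ∨ Wn i j + (x j : TT) = s) :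
    R.card + D.card ≤ n + 2 := by
  have key : ∀ i ∈ R, ∃ A : Finset (Fin (n + 1)), A.card = 2 ∧ ∀ j ∈ A, tmod Wp Wn i j ≠ ⊥ ∧
      ∀ k, tmod Wp Wn i k + (x k : TT) ≤ tmod Wp Wn i j + (x j : TT) := by
    intro i hi
    have h := hR i hi
    have hne := row_ne_bot (Wp i) (Wn i) (hrow i) x h.ge
    obtain ⟨p, hp⟩ := WithBot.ne_bot_iff_exists.mp hne
    obtain ⟨j, -, hj⟩ := sup_attained Finset.univ _ hne
    obtain ⟨k, -, hk⟩ := sup_attained Finset.univ _ (h ▸ hne)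
    change Wp i j + (x j : TT) = tdot (Wp i) (toT x) at hj
    change Wn i k + (x k : TT) = tdot (Wn i) (toT x) at hk
    rw [← h, ← hp] at hk
    rw [← hp] at hj
    refine ⟨{j, k}, Finset.card_pair (sign_excl _ _ (hsign i) x p j k hj hk), ?_⟩
    intro l hl
    apply deg_mem (Wp i) (Wn i) x p hp.ge (h ▸ hp.ge)
    simp at hl
    rcases hl with rfl | rfl
    · exact Or.inl hj
    · exact Or.inr hk
  choose! A hA2 hA using key
  have := generic_sum (Nat.succ_pos n) (tmod Wp Wn) hgen x R (Function.update A i D) (by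
    intro l hl j hj
    by_cases hli : l = i
    · subst hli
      rw [Function.update_self] at hj
      exact deg_mem (Wp l) (Wn l) x s hs (hR l hl ▸ hs) j (hD j hj)
    · rw [Function.update_of_ne hli] at hj
      exact hA l hl j hj)
  rw [← Finset.add_sum_erase R _ hi, Function.update_self,
    Finset.sum_congr rfl (g := fun _ => 2) (fun l hl => by
      rw [Function.update_of_ne (Finset.ne_of_mem_erase hl)]
      exact hA2 l (Finset.mem_of_mem_erase hl))] at this
  rw [Finset.sum_const, Finset.card_erase_of_mem hi, smul_eq_mul] at this
  have : 0 < R.card := Finset.card_pos.mpr ⟨i, hi⟩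
  omega

theorem sup_lt_of {n : ℕ} (a : Fin (n + 1) → TT) (ξ : Fin (n + 1) → ℝ)
    (J : Finset (Fin (n + 1))) (h0 : tdot a (toT ξ) ≠ ⊥)
    (h : ∀ j ∈ J, ¬ (a j + (ξ j : TT) = tdot a (toT ξ))) :
    (J.sup fun j => a j + (ξ j : TT)) < tdot a (toT ξ) := by
  rw [Finset.sup_lt_iff (bot_lt_iff_ne_bot.mpr h0)]
  intro j hj
  exact lt_of_le_of_ne (Finset.le_sup (f := fun k => a k + toT ξ k) (Finset.mem_univ j)) (h j hj)

theorem rowA (PC PJ NC NJ : TT) (μ : ℝ) (hμ : 0 < μ)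
    (h0 : max PC PJ = max NC NJ) (hP : PJ < max PC PJ) (hN : NJ < max NC NJ)
    (h1 : max PC (PJ + (μ : TT)) = max NC (NJ + (μ : TT)))
    (hn : ¬ (PJ + (μ : TT) ≤ max PC PJ ∧ NJ + (μ : TT) ≤ max PC PJ)) :
    ∃ p u : ℝ, PC = p ∧ NC = p ∧ PJ = u ∧ NJ = u ∧ u < p ∧ p < u + μ := by
  have e1 : PJ < PC := by simpa using hP
  have e2 : NJ < NC := by simpa using hN
  rw [max_eq_left e1.le, max_eq_left e2.le] at h0
  subst h0
  rw [max_eq_left e1.le] at hn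
  obtain ⟨p, rfl⟩ := WithBot.ne_bot_iff_exists.mp (ne_bot_of_gt e1)
  induction PJ using WithBot.recBotCoe <;> induction NJ using WithBot.recBotCoe
  · simp at hn
  · rename_i v
    simp at hn h1
    norm_cast at *
    linarith
  · rename_i v
    simp at hn h1
    norm_cast at *
    linarith
  · rename_i u v
    norm_cast at *
    have : u = v ∧ p < u + μ := by
      clear hP hN
      rcases not_and_or.mp hn with h | h <;> push Not at h <;>
      rcases max_cases p (u + μ) with ⟨a, b⟩ | ⟨a, b⟩ <;>
      rcases max_cases p (v + μ) with ⟨c, d⟩ | ⟨c, d⟩ <;>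
      rw [a, c] at h1 <;> constructor <;> linarith
    obtain ⟨rfl, h3⟩ := this
    exact ⟨p, u, rfl, rfl, rfl, rfl, e1, h3⟩

theorem rowB (PC PJ NC NJ : TT) (μ : ℝ)
    (hP : PJ < max PC PJ) (hJ : PJ ≤ NJ)
    (h1 : max NC (NJ + (μ : TT)) ≤ max PC (PJ + (μ : TT)))
    (hn : ¬ (NJ + (μ : TT) ≤ max PC PJ)) :
    ∃ p u : ℝ, PC = p ∧ PJ = u ∧ NJ = u ∧ u < p ∧ p < u + μ := by
  have e1 : PJ < PC := by simpa using hP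
  rw [max_eq_left e1.le] at hn
  obtain ⟨p, rfl⟩ := WithBot.ne_bot_iff_exists.mp (ne_bot_of_gt e1)
  replace h1 := (le_max_right _ _).trans h1
  induction PJ using WithBot.recBotCoe <;> induction NJ using WithBot.recBotCoe
  · simp at hn
  · rename_i v
    simp at hn h1
    norm_cast at *
    linarith
  · simp at hn
  · rename_i u v
    norm_cast at *
    have : u = v ∧ p < u + μ := by
      push Not at hn
      rcases le_max_iff.mp h1 with h | h
      · linarith
      · constructor <;> linarith
    obtain ⟨rfl, h3⟩ := this
    exact ⟨p, u, rfl, rfl, rfl, e1, h3⟩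

theorem rowC_aux (PC PJ NC NJ : TT) (μ l : ℝ) (hμ : 0 < μ) (hl : 0 ≤ l)
    (hne : max PC PJ ≠ ⊥) (h0 : max PC PJ = max NC NJ)
    (h1 : max PC (PJ + (μ : TT)) = max NC (NJ + (μ : TT)))
    (hP : ¬ PJ < max PC PJ) :
    max PC (PJ + (l : TT)) = max NC (NJ + (l : TT)) := by
  have e1 : PC ≤ PJ := by simpa using hP
  rw [max_eq_right e1] at h0 hne
  obtain ⟨u, rfl⟩ := WithBot.ne_bot_iff_exists.mp hne
  have a1 : PC ≤ ((u + μ : ℝ) : TT) := e1.trans (by norm_cast; linarith)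
  have a2 : PC ≤ ((u + l : ℝ) : TT) := e1.trans (by norm_cast; linarith)
  have b : NC ≤ (u : TT) := h0 ▸ le_max_left _ _
  have b' : NJ ≤ (u : TT) := h0 ▸ le_max_right _ _
  have b2 : NC ≤ ((u + l : ℝ) : TT) := b.trans (by norm_cast; linarith)
  norm_cast at *
  rw [max_eq_right a1] at h1
  rw [max_eq_right a2]
  have c : ((u + μ : ℝ) : TT) ≤ NJ + (μ : TT) := by
    rcases le_max_iff.mp h1.le with h | h
    · have := h.trans b
      norm_cast at this
      linarith
    · exact h
  have d : NJ = (u : TT) := by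
    apply le_antisymm b'
    induction NJ using WithBot.recBotCoe
    · simp at c
    · norm_cast at *; linarith
  rw [d]
  norm_cast
  rw [max_eq_right b2]

theorem rowC (PC PJ NC NJ : TT) (μ l : ℝ) (hμ : 0 < μ) (hl : 0 ≤ l)
    (hne : max PC PJ ≠ ⊥) (h0 : max PC PJ = max NC NJ)
    (h1 : max PC (PJ + (μ : TT)) = max NC (NJ + (μ : TT)))
    (hB : PJ < max PC PJ → NJ < max NC NJ →
      PJ + (l : TT) ≤ max PC PJ ∧ NJ + (l : TT) ≤ max PC PJ) :
    max PC (PJ + (l : TT)) = max NC (NJ + (l : TT)) := by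
  by_cases hP : PJ < max PC PJ
  · by_cases hN : NJ < max NC NJ
    · obtain ⟨c1, c2⟩ := hB hP hN
      have e1 : PJ < PC := by simpa using hP
      have e2 : NJ < NC := by simpa using hN
      rw [max_eq_left e1.le, max_eq_left e2.le] at h0
      rw [max_eq_left e1.le] at c1 c2
      rw [max_eq_left c1, max_eq_left (h0 ▸ c2), h0]
    · exact (rowC_aux NC NJ PC PJ μ l hμ hl (h0 ▸ hne) h0.symm h1.symm hN).symm
  · exact rowC_aux PC PJ NC NJ μ l hμ hl hne h0 h1 hP

theorem rowD (PC PJ NC NJ : TT) (l : ℝ) (hl : 0 ≤ l)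
    (h0 : max NC NJ ≤ max PC PJ)
    (hL : PJ < max PC PJ → PJ ≤ NJ → NJ + (l : TT) ≤ max PC PJ) :
    max NC (NJ + (l : TT)) ≤ max PC (PJ + (l : TT)) := by
  have hmono : max PC PJ ≤ max PC (PJ + (l : TT)) := by
    apply max_le_max le_rfl
    exact le_add_of_nonneg_right (by exact_mod_cast hl)
  apply max_le
  · exact (le_max_left _ _).trans (h0.trans hmono)
  · by_cases hP : PJ < max PC PJ
    · rcases le_total PJ NJ with h | h
      · exact (hL hP h).trans hmono
      · apply le_max_of_le_right
        gcongr
    · have e1 : PC ≤ PJ := by simpa using hP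
      rw [max_eq_right e1] at h0
      apply le_max_of_le_right
      gcongr
      exact (le_max_right _ _).trans h0

theorem tE_sub_anti (p s t : TT) (h : t ≤ s) : tE p - tE s ≤ tE p - tE t := by
  apply EReal.sub_le_sub le_rfl
  induction t using WithBot.recBotCoe with
  | bot => simp [tE]
  | coe t =>
    induction s using WithBot.recBotCoe with
    | bot => simp at h
    | coe s =>
      simp only [tE, WithBot.recBotCoe_coe]
      exact_mod_cast h

/-- The length `μ` of an ordinary segment of `E_K` is the
greatest `λ ≥ 0` with `λ ≤ min(λ⁺_i, λ⁻_i)` for `i ∈ B(ξ,J)` and `λ ≤ λ⁻_i`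
for those `i ∈ Λ(ξ,J)` with `λ⁻_i ≤ λ⁺_i`. -/
theorem stmt12 {m n : ℕ} (Wp Wn : Fin m → Fin (n + 1) → TT)
    (hsign : ∀ i j, min (Wp i j) (Wn i j) = ⊥)
    (hrow : ∀ i, ∃ j, max (Wp i j) (Wn i j) ≠ ⊥)
    (hgen : TropGeneric (tmod Wp Wn))
    (hfin : ∀ x ∈ coneC Wp Wn, x ≠ (fun _ => (⊥ : TT)) → ∀ j, x j ≠ ⊥)
    (K : Finset (Fin m)) (hK : K.card + 1 = n)
    (hU : ∃ (er : Fin K.card → Fin m) (ec : Fin K.card → Fin (n + 1)),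
      Function.Injective er ∧ (∀ a, er a ∈ K) ∧ Function.Injective ec ∧
      (∀ a, ec a ≠ Fin.last n) ∧ ⊥ < tper (fun a b => tmod Wp Wn (er a) (ec b)))
    (hEK : ∃ y : Fin (n + 1) → ℝ, toT y ∈ edgeEK Wp Wn K)
    (ξ : Fin (n + 1) → ℝ) (J : Finset (Fin (n + 1))) (μ : ℝ)
    (hseg : IsOrdSeg Wp Wn K ξ J μ) :
    (∀ i ∈ brkSet Wp Wn K ξ J,
      (μ : EReal) ≤ min (lamP Wp i ξ J) (lamM Wp Wn i ξ J)) ∧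
    (∀ i ∈ entSet Wp K ξ J,
      lamM Wp Wn i ξ J ≤ lamP Wp i ξ J → (μ : EReal) ≤ lamM Wp Wn i ξ J) ∧
    ∀ lam : ℝ, 0 ≤ lam →
      (∀ i ∈ brkSet Wp Wn K ξ J,
        (lam : EReal) ≤ min (lamP Wp i ξ J) (lamM Wp Wn i ξ J)) →
      (∀ i ∈ entSet Wp K ξ J,
        lamM Wp Wn i ξ J ≤ lamP Wp i ξ J → (lam : EReal) ≤ lamM Wp Wn i ξ J) →
      lam ≤ μ := by
  obtain ⟨hμ, -, -, hmem, -, hmax⟩ := hseg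
  have hcone : ∀ i l, 0 ≤ l → l ≤ μ → tdot (Wn i) (toT (ξ + l • eJ J)) ≤
      tdot (Wp i) (toT (ξ + l • eJ J)) := fun i l h1 h2 => (hmem l h1 h2).2 i
  have hhyp : ∀ i ∈ K, ∀ l, 0 ≤ l → l ≤ μ → tdot (Wp i) (toT (ξ + l • eJ J)) =
      tdot (Wn i) (toT (ξ + l • eJ J)) := fun i hi l h1 h2 => (hmem l h1 h2).1 i hi
  have hcone0 : ∀ i, tdot (Wn i) (toT ξ) ≤ tdot (Wp i) (toT ξ) := by
    intro i
    simpa using hcone i 0 le_rfl hμ.le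
  have hhyp0 : ∀ i ∈ K, tdot (Wp i) (toT ξ) = tdot (Wn i) (toT ξ) := by
    intro i hi
    simpa using hhyp i hi 0 le_rfl hμ.le
  have hne : ∀ i, tdot (Wp i) (toT ξ) ≠ ⊥ := fun i => row_ne_bot _ _ (hrow i) ξ (hcone0 i)
  have att : ∀ (a : Fin (n + 1) → TT) (p u : ℝ), (J.sup fun j => a j + (ξ j : TT)) = (u : TT) →
      ∃ j ∈ J, a j + ((ξ + (p - u) • eJ J) j : TT) = (p : TT) := by
    intro a p u h
    obtain ⟨j, hj, he⟩ := sup_attained J (fun j => a j + (ξ j : TT)) (by rw [h]; simp)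
    refine ⟨j, hj, ?_⟩
    rw [h] at he
    have : (ξ + (p - u) • eJ J) j = ξ j + (p - u) := by simp [eJ, hj]
    rw [this, WithBot.coe_add, ← add_assoc, he]
    norm_cast
    ring
  have attc : ∀ (a : Fin (n + 1) → TT) (p u : ℝ), (Jᶜ.sup fun j => a j + (ξ j : TT)) = (p : TT) →
      ∃ j ∉ J, a j + ((ξ + (p - u) • eJ J) j : TT) = (p : TT) := by
    intro a p u h
    obtain ⟨j, hj, he⟩ := sup_attained Jᶜ (fun j => a j + (ξ j : TT)) (by rw [h]; simp)
    rw [Finset.mem_compl] at hj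
    refine ⟨j, hj, ?_⟩
    have : (ξ + (p - u) • eJ J) j = ξ j := by simp [eJ, hj]
    rw [this, he, h]
  refine ⟨?_, ?_, ?_⟩
  · rintro i ⟨hiK, hiP, hiN⟩
    rw [le_min_iff, lamP, lamM, tE_sub_le _ _ _ (hne i), tE_sub_le _ _ _ (hne i)]
    by_contra hcon
    have hP := sup_lt_of (Wp i) ξ J (hne i) hiP
    have hN := sup_lt_of (Wn i) ξ J (hhyp0 i hiK ▸ hne i) hiN
    have h0 := hhyp0 i hiK
    have h1 := hhyp i hiK μ hμ.le le_rfl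
    rw [tdot_shift, tdot_shift] at h1
    rw [tdot_split (Wp i) ξ J] at hcon hP h0
    rw [tdot_split (Wn i) ξ J] at hN h0
    obtain ⟨p, u, e1, e2, e3, e4, hup, hpu⟩ := rowA _ _ _ _ μ hμ h0 hP hN h1 hcon
    obtain ⟨j1, m1, q1⟩ := att (Wp i) p u e3
    obtain ⟨j2, m2, q2⟩ := att (Wn i) p u e4
    obtain ⟨j3, m3, q3⟩ := attc (Wp i) p u e1
    obtain ⟨j4, m4, q4⟩ := attc (Wn i) p u e2
    have n12 := sign_excl _ _ (hsign i) _ p j1 j2 q1 q2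
    have n34 := sign_excl _ _ (hsign i) _ p j3 j4 q3 q4
    have hc : ({j1, j2, j3, j4} : Finset (Fin (n + 1))).card = 4 := by
      have n13 : j1 ≠ j3 := fun h => m3 (h ▸ m1)
      have n14 : j1 ≠ j4 := fun h => m4 (h ▸ m1)
      have n23 : j2 ≠ j3 := fun h => m3 (h ▸ m2)
      have n24 : j2 ≠ j4 := fun h => m4 (h ▸ m2)
      simp [n12, n13, n14, n23, n24, n34]
    have := no_excess Wp Wn hsign hrow hgen K (ξ + (p - u) • eJ J)
      (fun k hk => hhyp k hk _ (by linarith) (by linarith)) i hiK {j1, j2, j3, j4} p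
      (by
        rw [tdot_shift, e1, e3]
        apply max_le le_rfl
        norm_cast
        linarith)
      (by
        intro j hj
        simp only [Finset.mem_insert, Finset.mem_singleton] at hj
        rcases hj with rfl | rfl | rfl | rfl
        · exact Or.inl q1
        · exact Or.inr q2
        · exact Or.inl q3
        · exact Or.inr q4)
    omega
  · rintro i ⟨hiK, hiP⟩ hlam
    have hJ := tE_sub_mono _ _ _ (hne i) hlam
    rw [lamM, tE_sub_le _ _ _ (hne i)]
    by_contra hcon
    have hP := sup_lt_of (Wp i) ξ J (hne i) hiP
    have h0 := hcone0 i
    have h1 := hcone i μ hμ.le le_rfl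
    rw [tdot_shift, tdot_shift] at h1
    rw [tdot_split (Wp i) ξ J] at hcon hP h0
    rw [tdot_split (Wn i) ξ J] at h0
    obtain ⟨p, u, e1, e3, e4, hup, hpu⟩ := rowB _ _ _ _ μ hP hJ h1 hcon
    obtain ⟨j1, m1, q1⟩ := att (Wp i) p u e3
    obtain ⟨j2, m2, q2⟩ := att (Wn i) p u e4
    obtain ⟨j3, m3, q3⟩ := attc (Wp i) p u e1
    have n12 := sign_excl _ _ (hsign i) _ p j1 j2 q1 q2
    have hc : ({j1, j2, j3} : Finset (Fin (n + 1))).card = 3 := by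
      have n13 : j1 ≠ j3 := fun h => m3 (h ▸ m1)
      have n23 : j2 ≠ j3 := fun h => m3 (h ▸ m2)
      simp [n12, n13, n23]
    have hx : (u : TT) + ((p - u : ℝ) : TT) = (p : TT) := by
      norm_cast
      ring
    have hPx : tdot (Wp i) (toT (ξ + (p - u) • eJ J)) = (p : TT) := by
      rw [tdot_shift, e1, e3, hx, max_self]
    have hNx : tdot (Wn i) (toT (ξ + (p - u) • eJ J)) = (p : TT) := by
      rw [tdot_shift, e4, hx]
      apply max_eq_right
      refine (le_max_left _ _).trans (h0.trans ?_)
      rw [e1, e3]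
      apply max_le le_rfl
      exact_mod_cast hup.le
    have := no_excess Wp Wn hsign hrow hgen (insert i K) (ξ + (p - u) • eJ J)
      (by
        intro k hk
        rcases Finset.mem_insert.mp hk with rfl | hk
        · rw [hPx, hNx]
        · exact hhyp k hk _ (by linarith) (by linarith))
      i (Finset.mem_insert_self _ _) {j1, j2, j3} p hPx.le
      (by
        intro j hj
        simp only [Finset.mem_insert, Finset.mem_singleton] at hj
        rcases hj with rfl | rfl | rfl
        · exact Or.inl q1
        · exact Or.inr q2
        · exact Or.inl q3)
    rw [Finset.card_insert_of_notMem hiK] at this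
    omega
  · intro l hl hB hL
    by_contra hlt
    push Not at hlt
    apply hmax (l - μ) (by linarith)
    have hle : ∀ (a : Fin (n + 1) → TT),
        (J.sup fun j => a j + (ξ j : TT)) < tdot a (toT ξ) →
        ∀ j ∈ J, ¬ (a j + (ξ j : TT) = tdot a (toT ξ)) := by
      intro a h j hj he
      exact absurd (Finset.le_sup (f := fun j => a j + (ξ j : TT)) hj) (by rw [he]; exact h.not_ge)
    have hK' : ∀ i ∈ K, tdot (Wp i) (toT (ξ + l • eJ J)) = tdot (Wn i) (toT (ξ + l • eJ J)) := by
      intro i hi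
      have h0 := hhyp0 i hi
      have h1 := hhyp i hi μ hμ.le le_rfl
      have hn := hne i
      rw [tdot_shift, tdot_shift] at h1 ⊢
      have hb : (J.sup fun j => Wp i j + (ξ j : TT)) < tdot (Wp i) (toT ξ) →
          (J.sup fun j => Wn i j + (ξ j : TT)) < tdot (Wn i) (toT ξ) →
          (J.sup fun j => Wp i j + (ξ j : TT)) + (l : TT) ≤ tdot (Wp i) (toT ξ) ∧
          (J.sup fun j => Wn i j + (ξ j : TT)) + (l : TT) ≤ tdot (Wp i) (toT ξ) := by
        intro c1 c2
        have := hB i ⟨hi, hle _ c1, hle _ c2⟩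
        rwa [le_min_iff, lamP, lamM, tE_sub_le _ _ _ (hne i), tE_sub_le _ _ _ (hne i)] at this
      rw [tdot_split (Wp i) ξ J] at h0 hn hb
      rw [tdot_split (Wn i) ξ J] at h0 hb
      exact rowC _ _ _ _ μ l hμ hl hn h0 h1 hb
    have hfinal : toT (ξ + l • eJ J) ∈ edgeEK Wp Wn K := by
      refine ⟨hK', fun i => ?_⟩
      by_cases hi : i ∈ K
      · exact (hK' i hi).ge
      · have h0 := hcone0 i
        have hb : (J.sup fun j => Wp i j + (ξ j : TT)) < tdot (Wp i) (toT ξ) →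
            (J.sup fun j => Wp i j + (ξ j : TT)) ≤ (J.sup fun j => Wn i j + (ξ j : TT)) →
            (J.sup fun j => Wn i j + (ξ j : TT)) + (l : TT) ≤ tdot (Wp i) (toT ξ) := by
          intro c1 c2
          by_contra hcon
          have hcon' := hcon
          rw [← tE_sub_le _ _ _ (hne i)] at hcon'
          apply hcon'
          apply hL i ⟨hi, hle _ c1⟩
          exact tE_sub_anti _ _ _ c2
        rw [tdot_shift, tdot_shift]
        rw [tdot_split (Wp i) ξ J] at h0 hb
        rw [tdot_split (Wn i) ξ J] at h0
        exact rowD _ _ _ _ l hl h0 hb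
    have hadd : μ + (l - μ) = l := by ring
    rw [hadd]
    exact hfinal
end
end

section
/- Let [ξ, ξ'] = {ξ + λe^J : 0 ≤ λ ≤ μ} (with μ > 0) be an ordinary segment of the tropical edge E_K. Then every point of the open segment {ξ + λe^J : 0 < λ < μ} has the same tangent digraph D_{]ξ,ξ'[}, and this digraph is the intersection of D_ξ and D_{ξ'}: its node set is the intersection of the node sets of D_ξ and D_{ξ'} (namely the coordinate nodes [n+1] and the hyperplane nodes K), and its arc set is the intersection of their arc sets. -/
open scoped Classical

noncomputable section

def NoTwo {ρ κ : Type} (N : ρ → Finset κ) : Prop :=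
  ∀ (q : ℕ) (r : Fin q → ρ) (c : Fin q → κ), Function.Injective r → Function.Injective c →
    ∀ σ : Equiv.Perm (Fin q), (∀ a, c a ∈ N (r a)) → (∀ a, c (σ a) ∈ N (r a)) → σ = 1

lemma exists_perm_of_noFix {α : Type} [Fintype α] [Nonempty α] (g : α → α) (hg : ∀ a, g a ≠ a) :
    ∃ σ : Equiv.Perm α, σ ≠ 1 ∧ ∀ a, σ a = a ∨ σ a = g a := by
  have hb := Function.bijOn_periodicPts g
  let h : α → α := fun a => if a ∈ Function.periodicPts g then g a else a
  have hinj : Function.Injective h := by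
    intro a b hab
    simp only [h] at hab
    split_ifs at hab with h1 h2 h2
    · exact hb.injOn h1 h2 hab
    · exact absurd (hab ▸ hb.mapsTo h1) h2
    · exact absurd (hab ▸ hb.mapsTo h2) h1
    · exact hab
  refine ⟨Equiv.ofBijective h (Finite.injective_iff_bijective.mp hinj), ?_, ?_⟩
  · intro he
    obtain ⟨a⟩ := ‹Nonempty α›
    have : ∃ p, p ∈ Function.periodicPts g := by
      obtain ⟨k, l, hkl, hk⟩ := Finite.exists_ne_map_eq_of_infinite (fun k : ℕ => g^[k] a)
      wlog hlt : k < l generalizing k l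
      · exact this l k hkl.symm hk.symm (by omega)
      refine ⟨g^[k] a, l - k, by omega, ?_⟩
      show g^[l-k] (g^[k] a) = g^[k] a
      rw [← Function.iterate_add_apply]
      have : l - k + k = l := by omega
      rw [this]; exact hk.symm
    obtain ⟨p, hp⟩ := this
    have h1 : h p = p := by
      have := congrArg (fun σ : Equiv.Perm α => σ p) he
      simpa using this
    simp only [h, if_pos hp] at h1
    exact hg p h1
  · intro a
    simp only [Equiv.ofBijective_apply, h]
    split_ifs
    · right; rfl
    · left; rfl

lemma noTwo_card {ρ κ : Type} [DecidableEq ρ] [DecidableEq κ] (N : ρ → Finset κ) (hN : NoTwo N)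
    (R : Finset ρ) : R.Nonempty → (∀ i ∈ R, 2 ≤ (N i).card) →
    R.card + 1 ≤ (R.biUnion N).card := by
  induction R using Finset.strongInduction with
  | H R ih =>
  intro hne h2
  by_contra hcon
  push Not at hcon
  have hcard : (R.biUnion N).card ≤ R.card := by omega
  have hR : R.card ≤ (R.biUnion N).card := by
    obtain ⟨i, hi⟩ := hne
    rcases (R.erase i).eq_empty_or_nonempty with h0 | h0
    · have : R.card = 1 := by
        have e := Finset.card_erase_of_mem hi
        rw [h0, Finset.card_empty] at e
        have e' := Finset.card_pos.mpr ⟨i, hi⟩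
        omega
      have h3 := h2 i hi
      have h4 := Finset.card_le_card (Finset.subset_biUnion_of_mem N hi)
      omega
    · have h3 := ih (R.erase i) (Finset.erase_ssubset hi) h0
        (fun k hk => h2 k (Finset.mem_of_mem_erase hk))
      have h4 := Finset.card_le_card
        (Finset.biUnion_subset_biUnion_of_subset_left N (Finset.erase_subset i R))
      have := Finset.card_erase_of_mem hi
      omega
  have hall : ∃ f : {i // i ∈ R} → κ, Function.Injective f ∧ ∀ i, f i ∈ N i.1 := by
    apply (Finset.all_card_le_biUnion_card_iff_exists_injective (fun i : {i // i ∈ R} => N i.1)).mp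
    intro s
    rcases s.eq_empty_or_nonempty with h0 | h0
    · simp [h0]
    have hs : s.biUnion (fun i => N i.1) = (s.image Subtype.val).biUnion N := by
      rw [Finset.image_biUnion]
    have hc : (s.image Subtype.val).card = s.card :=
      Finset.card_image_of_injective _ Subtype.val_injective
    have hsub : s.image Subtype.val ⊆ R := by
      intro i hi
      obtain ⟨a, _, rfl⟩ := Finset.mem_image.mp hi
      exact a.2
    rw [hs, ← hc]
    rcases hsub.eq_or_ssubset with he | he
    · rw [he]; exact hR
    · have := ih _ he (h0.image _) (fun i hi => h2 i (hsub hi))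
      omega
  obtain ⟨f, hf, hfN⟩ := hall
  have himg : Finset.univ.image f = R.biUnion N := by
    apply Finset.eq_of_subset_of_card_le
    · intro j hj
      obtain ⟨a, _, rfl⟩ := Finset.mem_image.mp hj
      exact Finset.mem_biUnion.mpr ⟨a.1, a.2, hfN a⟩
    · rw [Finset.card_image_of_injective _ hf]
      simpa using hcard
  have hg : ∀ i : {i // i ∈ R}, ∃ k, k ≠ i ∧ f k ∈ N i.1 := by
    intro i
    obtain ⟨j, hj, hne⟩ := Finset.exists_mem_ne (h2 i.1 i.2) (f i)
    have : j ∈ Finset.univ.image f := by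
      rw [himg]; exact Finset.mem_biUnion.mpr ⟨i.1, i.2, hj⟩
    obtain ⟨k, _, rfl⟩ := Finset.mem_image.mp this
    exact ⟨k, fun h => hne (by rw [h]), hj⟩
  choose g hg1 hg2 using hg
  have : Nonempty {i // i ∈ R} := ⟨⟨hne.choose, hne.choose_spec⟩⟩
  obtain ⟨σ, hσ1, hσ⟩ := exists_perm_of_noFix g hg1
  let e := Fintype.equivFin {i // i ∈ R}
  have := hN _ (fun a => (e.symm a).1) (fun a => f (e.symm a))
    (Subtype.val_injective.comp e.symm.injective) (hf.comp e.symm.injective)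
    ((e.symm.trans σ).trans e) (fun a => hfN _) (fun a => by
      simp only [Equiv.trans_apply, Equiv.symm_apply_apply]
      rcases hσ (e.symm a) with h | h <;> rw [h]
      · exact hfN _
      · exact hg2 _)
  apply hσ1
  ext1 a
  have h := congrArg (fun τ : Equiv.Perm _ => e.symm (τ (e a))) this
  simpa using h

def nbr {m n : ℕ} (M : Fin m → Fin (n+1) → TT) (x : Fin (n+1) → ℝ) (i : Fin m) :
    Finset (Fin (n+1)) :=
  Finset.univ.filter fun j => M i j + (x j : TT) = tdot (M i) (toT x)

lemma le_tdot {n : ℕ} (a : Fin (n+1) → TT) (x : Fin (n+1) → ℝ) (j) :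
    a j + (x j : TT) ≤ tdot a (toT x) :=
  Finset.le_sup (f := fun j => a j + toT x j) (Finset.mem_univ j)

lemma exists_tdot {n : ℕ} (a : Fin (n+1) → TT) (x : Fin (n+1) → ℝ) :
    ∃ j, a j + (x j : TT) = tdot a (toT x) := by
  obtain ⟨j, _, hj⟩ := Finset.exists_mem_eq_sup Finset.univ Finset.univ_nonempty
    (fun j => a j + toT x j)
  exact ⟨j, hj.symm⟩

lemma noTwo_nbr {m n : ℕ} (M : Fin m → Fin (n+1) → TT) (hM : ∀ i, ∃ j, M i j ≠ ⊥)
    (hgen : TropGeneric M) (x : Fin (n+1) → ℝ) : NoTwo (nbr M x) := by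
  intro q r c hr hc σ h1 h2
  by_contra hσ
  have hx : ∀ π : Equiv.Perm (Fin q), ∑ a, ((x (c (π a)) : ℝ) : TT) = ((∑ a, x (c a) : ℝ) : TT) := by
    intro π
    rw [← Equiv.sum_comp π (fun a => x (c a))]
    exact (map_sum (WithBot.addHom : ℝ →+ WithBot ℝ) _ _).symm
  have hx1 := hx 1
  simp only [nbr, Finset.mem_filter, Finset.mem_univ, true_and] at h1 h2
  have hT : ∀ i, tdot (M i) (toT x) ≠ ⊥ := by
    intro i h
    obtain ⟨j, hj⟩ := hM i
    have := le_tdot (M i) x j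
    rw [h, le_bot_iff, WithBot.add_eq_bot] at this
    rcases this with h | h
    · exact hj h
    · exact WithBot.coe_ne_bot h
  have e1 : ∑ a, M (r a) (c a) + ((∑ a, x (c a) : ℝ) : TT) = ∑ a, tdot (M (r a)) (toT x) := by
    rw [← hx 1, ← Finset.sum_add_distrib]
    exact Finset.sum_congr rfl (fun a _ => h1 a)
  have e2 : ∑ a, M (r a) (c (σ a)) + ((∑ a, x (c a) : ℝ) : TT) = ∑ a, tdot (M (r a)) (toT x) := by
    rw [← hx σ, ← Finset.sum_add_distrib]
    exact Finset.sum_congr rfl (fun a _ => h2 a)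
  have e3 : ∀ π : Equiv.Perm (Fin q), ∑ a, M (r a) (c (π a)) + ((∑ a, x (c a) : ℝ) : TT)
      ≤ ∑ a, tdot (M (r a)) (toT x) := by
    intro π
    rw [← hx π, ← Finset.sum_add_distrib]
    exact Finset.sum_le_sum (fun a _ => le_tdot _ _ _)
  have e4 : ∑ a, M (r a) (c (σ a)) = ∑ a, M (r a) (c a) :=
    (WithBot.add_right_inj WithBot.coe_ne_bot).mp (e2.trans e1.symm)
  have e5 : tper (fun i j => M (r i) (c j)) = ∑ a, M (r a) (c a) := by
    apply le_antisymm
    · apply Finset.sup_le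
      intro π _
      have := e3 π
      rw [← e1] at this
      exact (WithBot.add_le_add_iff_right WithBot.coe_ne_bot).mp this
    · exact Finset.le_sup (f := fun σ : Equiv.Perm (Fin q) => ∑ i, M (r i) (c (σ i)))
        (Finset.mem_univ 1)
  rcases hgen q r c hr hc with h | h
  · rw [e5] at h
    have h' : ∑ a, tdot (M (r a)) (toT x) = ⊥ := by rw [← e1, h, WithBot.bot_add]
    rw [WithBot.sum_eq_bot_iff] at h'
    obtain ⟨a, _, ha⟩ := h'
    exact hT _ ha
  · exact h (Or.inr ⟨1, σ, fun h => hσ h.symm, by rw [e5]; rfl, by rw [e5]; exact e4⟩)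

lemma core_count {m n : ℕ} (M : Fin m → Fin (n+1) → TT) (hM : ∀ i, ∃ j, M i j ≠ ⊥)
    (hgen : TropGeneric M) (x : Fin (n+1) → ℝ) (J : Finset (Fin (n+1))) (hJ : J ≠ ∅)
    (hJ' : J ≠ Finset.univ) (RA RB : Finset (Fin m))
    (hA : ∀ i ∈ RA, 2 ≤ (nbr M x i ∩ J).card) (hB : ∀ i ∈ RB, 2 ≤ (nbr M x i ∩ Jᶜ).card) :
    RA.card + RB.card + 1 ≤ n := by
  have key : ∀ (C : Finset (Fin (n+1))) (R : Finset (Fin m)), C.Nonempty →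
      (∀ i ∈ R, 2 ≤ (nbr M x i ∩ C).card) → R.card + 1 ≤ C.card := by
    intro C R hC hR
    rcases R.eq_empty_or_nonempty with h0 | h0
    · simp [h0]; exact hC
    have hno : NoTwo (fun i => nbr M x i ∩ C) := by
      intro q r c hr hc σ h1 h2
      exact noTwo_nbr M hM hgen x q r c hr hc σ (fun a => (Finset.mem_inter.mp (h1 a)).1)
        (fun a => (Finset.mem_inter.mp (h2 a)).1)
    refine (noTwo_card _ hno R h0 hR).trans (Finset.card_le_card ?_)
    exact Finset.biUnion_subset.mpr (fun i _ => Finset.inter_subset_right)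
  have a := key J RA (Finset.nonempty_iff_ne_empty.mpr hJ) hA
  have b := key Jᶜ RB (by
    rw [Finset.nonempty_iff_ne_empty]; intro h; exact hJ' (by simpa using h)) hB
  have := Finset.card_add_card_compl J
  rw [Fintype.card_fin] at this
  omega

lemma eJ_mem {n : ℕ} {J : Finset (Fin (n+1))} {j} (h : j ∈ J) (x : Fin (n+1) → ℝ) (l : ℝ) :
    (x + l • eJ J) j = x j + l := by simp [eJ, h]
lemma eJ_nmem {n : ℕ} {J : Finset (Fin (n+1))} {j} (h : j ∉ J) (x : Fin (n+1) → ℝ) (l : ℝ) :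
    (x + l • eJ J) j = x j := by simp [eJ, h]

/-- comparison of `M j + x j` terms -/
lemma le_real {a b : TT} {x y l : ℝ} (h : a + (x : TT) ≤ b + (y : TT)) (x' y' : ℝ)
    (hl : x' - x ≤ y' - y) : a + (x' : TT) ≤ b + (y' : TT) := by
  induction a using WithBot.recBotCoe with
  | bot => simp
  | coe a =>
    induction b using WithBot.recBotCoe with
    | bot =>
      simp only [WithBot.bot_add, le_bot_iff, ← WithBot.coe_add] at h
      exact absurd h WithBot.coe_ne_bot
    | coe b =>
      simp only [← WithBot.coe_add, WithBot.coe_le_coe] at *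
      linarith

lemma up_lem {n : ℕ} (A B : Fin (n+1) → TT) (x : Fin (n+1) → ℝ) (J : Finset (Fin (n+1)))
    (ε : ℝ) (hε : 0 < ε) (heq : tdot A (toT x) = tdot B (toT x)) (hb : tdot A (toT x) ≠ ⊥)
    (hle : tdot B (toT (x + ε • eJ J)) ≤ tdot A (toT (x + ε • eJ J)))
    (j : Fin (n+1)) (hj : j ∈ J) (hjB : B j + (x j : TT) = tdot B (toT x)) :
    ∃ k ∈ J, A k + (x k : TT) = tdot A (toT x) := by
  obtain ⟨k, hk⟩ := exists_tdot A (x + ε • eJ J)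
  have h1 := le_tdot B (x + ε • eJ J) j
  have h2 := (h1.trans hle).trans hk.ge
  have h3 := le_tdot A x k
  rw [eJ_mem hj] at h2
  obtain ⟨v, hv⟩ := WithBot.ne_bot_iff_exists.mp hb
  rw [← heq, ← hv] at hjB
  rw [← hv] at h3 ⊢
  by_cases hkJ : k ∈ J
  · refine ⟨k, hkJ, le_antisymm h3 ?_⟩
    rw [eJ_mem hkJ] at h2
    rw [← hjB]
    exact le_real (l := 0) h2 _ _ (by linarith)
  · exfalso
    rw [eJ_nmem hkJ] at h2
    have := h2.trans h3
    rw [WithBot.coe_add, ← add_assoc, hjB, ← WithBot.coe_add, WithBot.coe_le_coe] at this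
    linarith

lemma dn_lem {n : ℕ} (A B : Fin (n+1) → TT) (x : Fin (n+1) → ℝ) (J : Finset (Fin (n+1)))
    (ε : ℝ) (hε : ε < 0) (heq : tdot A (toT x) = tdot B (toT x)) (hb : tdot A (toT x) ≠ ⊥)
    (hle : tdot B (toT (x + ε • eJ J)) ≤ tdot A (toT (x + ε • eJ J)))
    (j : Fin (n+1)) (hj : j ∉ J) (hjB : B j + (x j : TT) = tdot B (toT x)) :
    ∃ k, k ∉ J ∧ A k + (x k : TT) = tdot A (toT x) := by
  obtain ⟨k, hk⟩ := exists_tdot A (x + ε • eJ J)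
  have h1 := le_tdot B (x + ε • eJ J) j
  have h2 := (h1.trans hle).trans hk.ge
  have h3 := le_tdot A x k
  rw [eJ_nmem hj] at h2
  obtain ⟨v, hv⟩ := WithBot.ne_bot_iff_exists.mp hb
  rw [← heq, ← hv] at hjB
  rw [← hv] at h3 ⊢
  by_cases hkJ : k ∈ J
  · exfalso
    rw [eJ_mem hkJ] at h2
    rw [hjB] at h2
    have h4 : (v : TT) + ((-ε : ℝ) : TT) ≤ v := by
      refine le_trans ?_ h3
      have := le_real (a := (v : TT)) (b := A k) (x := 0) (y := x k + ε) (l := 0)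
        (by simpa using h2) (-ε) (x k) (by linarith)
      exact this
    rw [← WithBot.coe_add, WithBot.coe_le_coe] at h4
    linarith
  · refine ⟨k, hkJ, le_antisymm h3 ?_⟩
    rw [eJ_nmem hkJ] at h2
    rw [← hjB]
    exact h2

lemma tdot_tmod {m n : ℕ} (Wp Wn : Fin m → Fin (n + 1) → TT) (i : Fin m) (x : Fin (n+1) → ℝ) :
    tdot (tmod Wp Wn i) (toT x) = max (tdot (Wp i) (toT x)) (tdot (Wn i) (toT x)) := by
  unfold tdot tmod
  rw [← Finset.sup_sup]
  congr 1
  funext j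
  exact max_add _ _ _

lemma tmod_nbr {m n : ℕ} (Wp Wn : Fin m → Fin (n + 1) → TT) (i : Fin m) (x : Fin (n+1) → ℝ)
    (heq : tdot (Wp i) (toT x) = tdot (Wn i) (toT x)) (j : Fin (n+1))
    (h : Wp i j + (x j : TT) = tdot (Wp i) (toT x) ∨ Wn i j + (x j : TT) = tdot (Wn i) (toT x)) :
    j ∈ nbr (tmod Wp Wn) x i := by
  simp only [nbr, Finset.mem_filter, Finset.mem_univ, true_and]
  have h0 : tmod Wp Wn i j + (x j : TT) = max (Wp i j + (x j : TT)) (Wn i j + (x j : TT)) :=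
    max_add _ _ _
  have h1 := le_tdot (Wp i) x j
  have h2 := le_tdot (Wn i) x j
  rw [tdot_tmod, h0, ← heq, max_self]
  rw [← heq] at h h2
  rcases h with h | h
  · rw [h]; exact max_eq_left h2
  · rw [h]; exact max_eq_right h1

lemma nbr_tmod {m n : ℕ} (Wp Wn : Fin m → Fin (n + 1) → TT) (i : Fin m) (x : Fin (n+1) → ℝ)
    (heq : tdot (Wp i) (toT x) = tdot (Wn i) (toT x)) (j : Fin (n+1))
    (h : j ∈ nbr (tmod Wp Wn) x i) :
    Wp i j + (x j : TT) = tdot (Wp i) (toT x) ∨ Wn i j + (x j : TT) = tdot (Wn i) (toT x) := by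
  simp only [nbr, Finset.mem_filter, Finset.mem_univ, true_and] at h
  have h0 : tmod Wp Wn i j + (x j : TT) = max (Wp i j + (x j : TT)) (Wn i j + (x j : TT)) :=
    max_add _ _ _
  rw [tdot_tmod, h0, ← heq, max_self] at h
  rw [← heq]
  rcases max_choice (Wp i j + (x j : TT)) (Wn i j + (x j : TT)) with h' | h' <;> rw [h'] at h
  · left; exact h
  · right; exact h

lemma two_of {m n : ℕ} (Wp Wn : Fin m → Fin (n + 1) → TT)
    (hsign : ∀ i j, min (Wp i j) (Wn i j) = ⊥) (i : Fin m) (x : Fin (n+1) → ℝ)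
    (heq : tdot (Wp i) (toT x) = tdot (Wn i) (toT x)) (hb : tdot (Wp i) (toT x) ≠ ⊥)
    (C : Finset (Fin (n+1))) (j k : Fin (n+1)) (hj : j ∈ C) (hk : k ∈ C)
    (h1 : Wp i j + (x j : TT) = tdot (Wp i) (toT x))
    (h2 : Wn i k + (x k : TT) = tdot (Wn i) (toT x)) :
    2 ≤ (nbr (tmod Wp Wn) x i ∩ C).card := by
  have : 1 < (nbr (tmod Wp Wn) x i ∩ C).card := by
    apply Finset.one_lt_card.mpr
    refine ⟨j, Finset.mem_inter.mpr ⟨tmod_nbr Wp Wn i x heq j (Or.inl h1), hj⟩, k,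
      Finset.mem_inter.mpr ⟨tmod_nbr Wp Wn i x heq k (Or.inr h2), hk⟩, ?_⟩
    rintro rfl
    rcases min_eq_bot.mp (hsign i j) with h | h
    · rw [h, WithBot.bot_add] at h1; exact hb h1.symm
    · rw [h, WithBot.bot_add] at h2; rw [heq] at hb; exact hb h2.symm
  exact this

lemma mem_nbr_iff {m n : ℕ} (M : Fin m → Fin (n+1) → TT) (x : Fin (n+1) → ℝ) (i : Fin m) (j) :
    j ∈ nbr M x i ↔ ∀ k, M i k + (x k : TT) ≤ M i j + (x j : TT) := by
  simp only [nbr, Finset.mem_filter, Finset.mem_univ, true_and]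
  constructor
  · intro h k
    rw [h]; exact le_tdot _ _ _
  · intro h
    exact le_antisymm (le_tdot _ _ _) (Finset.sup_le fun k _ => h k)

/-- The tangent digraph is constant on the relative interior
of an ordinary segment, and it is the intersection of the tangent digraphs at
the two endpoints; its hyperplane node set is `K`. -/
theorem stmt14 {m n : ℕ} (Wp Wn : Fin m → Fin (n + 1) → TT)
    (hsign : ∀ i j, min (Wp i j) (Wn i j) = ⊥)
    (hrow : ∀ i, ∃ j, max (Wp i j) (Wn i j) ≠ ⊥)
    (hgen : TropGeneric (tmod Wp Wn))
    (hfin : ∀ x ∈ coneC Wp Wn, x ≠ (fun _ => (⊥ : TT)) → ∀ j, x j ≠ ⊥)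
    (K : Finset (Fin m)) (hK : K.card + 1 = n)
    (hU : ∃ (er : Fin K.card → Fin m) (ec : Fin K.card → Fin (n + 1)),
      Function.Injective er ∧ (∀ a, er a ∈ K) ∧ Function.Injective ec ∧
      (∀ a, ec a ≠ Fin.last n) ∧ ⊥ < tper (fun a b => tmod Wp Wn (er a) (ec b)))
    (hEK : ∃ y : Fin (n + 1) → ℝ, toT y ∈ edgeEK Wp Wn K)
    (ξ : Fin (n + 1) → ℝ) (J : Finset (Fin (n + 1))) (μ : ℝ)
    (hseg : IsOrdSeg Wp Wn K ξ J μ) :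
    ∀ lam : ℝ, 0 < lam → lam < μ →
      (∀ i, isHypNode Wp Wn (ξ + lam • eJ J) i ↔ i ∈ K) ∧
      (∀ i, (isHypNode Wp Wn ξ i ∧ isHypNode Wp Wn (ξ + μ • eJ J) i) ↔ i ∈ K) ∧
      (∀ u v, arcRel Wp Wn (ξ + lam • eJ J) u v ↔
        (arcRel Wp Wn ξ u v ∧ arcRel Wp Wn (ξ + μ • eJ J) u v)) := by
  obtain ⟨hμ, hJ, hJ', hin, -, -⟩ := hseg
  have hM : ∀ i, ∃ j, tmod Wp Wn i j ≠ ⊥ := hrow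
  have hnode : ∀ x i, isHypNode Wp Wn x i ↔ tdot (Wp i) (toT x) = tdot (Wn i) (toT x) := by
    intro x i
    refine ⟨fun h => h.1, fun h => ⟨h, ?_⟩⟩
    rw [bot_lt_iff_ne_bot]
    intro hb
    obtain ⟨j, hj⟩ := hM i
    have h1 := le_tdot (tmod Wp Wn i) x j
    rw [tdot_tmod, ← h, hb, max_self, le_bot_iff, WithBot.add_eq_bot] at h1
    rcases h1 with h | h
    · exact hj h
    · exact WithBot.coe_ne_bot h
  have hKn : ∀ lam : ℝ, 0 ≤ lam → lam ≤ μ → ∀ i ∈ K, isHypNode Wp Wn (ξ + lam • eJ J) i :=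
    fun lam h0 h1 i hi => (hnode _ _).mpr ((hin lam h0 h1).1 i hi)
  have hshift : ∀ a b : ℝ, ξ + a • eJ J + (b - a) • eJ J = ξ + b • eJ J := by
    intro a b; rw [add_assoc, ← add_smul]; congr 2; ring
  -- interior node sets
  have upn : ∀ lam : ℝ, 0 < lam → lam < μ → ∀ i, isHypNode Wp Wn (ξ + lam • eJ J) i →
      2 ≤ (nbr (tmod Wp Wn) (ξ + lam • eJ J) i ∩ J).card ∨
      2 ≤ (nbr (tmod Wp Wn) (ξ + lam • eJ J) i ∩ Jᶜ).card := by
    intro lam h0 h1 i hi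
    have hb := bot_lt_iff_ne_bot.mp hi.2
    obtain ⟨k, hk⟩ := exists_tdot (Wn i) (ξ + lam • eJ J)
    by_cases hkJ : k ∈ J
    · left
      obtain ⟨j, hj, hj'⟩ := up_lem (Wp i) (Wn i) (ξ + lam • eJ J) J (μ - lam) (by linarith) hi.1 hb
        (by rw [hshift]; exact (hin μ hμ.le le_rfl).2 i) k hkJ hk
      exact two_of Wp Wn hsign i _ hi.1 hb J j k hj hkJ hj' hk
    · right
      obtain ⟨j, hj, hj'⟩ := dn_lem (Wp i) (Wn i) (ξ + lam • eJ J) J (0 - lam) (by linarith) hi.1 hb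
        (by rw [hshift]; exact (hin 0 le_rfl hμ.le).2 i) k hkJ hk
      exact two_of Wp Wn hsign i _ hi.1 hb Jᶜ j k (by simpa using hj) (by simpa using hkJ) hj' hk
  have int_sub : ∀ lam : ℝ, 0 < lam → lam < μ → ∀ i, isHypNode Wp Wn (ξ + lam • eJ J) i → i ∈ K := by
    intro lam h0 h1 i hi
    by_contra hiK
    have hall : ∀ k ∈ insert i K, isHypNode Wp Wn (ξ + lam • eJ J) k := by
      intro k hk
      rcases Finset.mem_insert.mp hk with rfl | hk
      · exact hi
      · exact hKn lam h0.le h1.le k hk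
    have hc := core_count (tmod Wp Wn) hM hgen (ξ + lam • eJ J) J hJ hJ'
      ((insert i K).filter fun k => 2 ≤ (nbr (tmod Wp Wn) (ξ + lam • eJ J) k ∩ J).card)
      ((insert i K).filter fun k => 2 ≤ (nbr (tmod Wp Wn) (ξ + lam • eJ J) k ∩ Jᶜ).card)
      (fun k hk => (Finset.mem_filter.mp hk).2) (fun k hk => (Finset.mem_filter.mp hk).2)
    have hs : insert i K ⊆
        ((insert i K).filter fun k => 2 ≤ (nbr (tmod Wp Wn) (ξ + lam • eJ J) k ∩ J).card) ∪
        ((insert i K).filter fun k => 2 ≤ (nbr (tmod Wp Wn) (ξ + lam • eJ J) k ∩ Jᶜ).card) := by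
      intro k hk
      rw [Finset.mem_union, Finset.mem_filter, Finset.mem_filter]
      rcases upn lam h0 h1 k (hall k hk) with h | h
      · exact Or.inl ⟨hk, h⟩
      · exact Or.inr ⟨hk, h⟩
    have h3 := (Finset.card_le_card hs).trans (Finset.card_union_le _ _)
    rw [Finset.card_insert_of_notMem hiK] at h3
    omega
  have noboth : ∀ lam : ℝ, 0 < lam → lam < μ → ∀ i ∈ K, ∀ j ∈ J, ∀ k, k ∉ J →
      j ∈ nbr (tmod Wp Wn) (ξ + lam • eJ J) i → k ∈ nbr (tmod Wp Wn) (ξ + lam • eJ J) i → False := by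
    intro lam h0 h1 i hiK j hj k hk hjn hkn
    have hi := hKn lam h0.le h1.le i hiK
    have hb := bot_lt_iff_ne_bot.mp hi.2
    have hb' : tdot (Wn i) (toT (ξ + lam • eJ J)) ≠ ⊥ := by rw [← hi.1]; exact hb
    have eμ := (hin μ hμ.le le_rfl).1 i hiK
    have e0 := (hin 0 le_rfl hμ.le).1 i hiK
    have c1 : 2 ≤ (nbr (tmod Wp Wn) (ξ + lam • eJ J) i ∩ J).card := by
      rcases nbr_tmod Wp Wn i _ hi.1 j hjn with h | h
      · obtain ⟨l, hl, hl'⟩ := up_lem (Wn i) (Wp i) (ξ + lam • eJ J) J (μ - lam) (by linarith)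
          hi.1.symm hb' (by rw [hshift]; exact le_of_eq eμ) j hj h
        exact two_of Wp Wn hsign i _ hi.1 hb J j l hj hl h hl'
      · obtain ⟨l, hl, hl'⟩ := up_lem (Wp i) (Wn i) (ξ + lam • eJ J) J (μ - lam) (by linarith)
          hi.1 hb (by rw [hshift]; exact ge_of_eq eμ) j hj h
        exact two_of Wp Wn hsign i _ hi.1 hb J l j hl hj hl' h
    have c2 : 2 ≤ (nbr (tmod Wp Wn) (ξ + lam • eJ J) i ∩ Jᶜ).card := by
      have hk' : k ∈ Jᶜ := by simpa using hk
      rcases nbr_tmod Wp Wn i _ hi.1 k hkn with h | h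
      · obtain ⟨l, hl, hl'⟩ := dn_lem (Wn i) (Wp i) (ξ + lam • eJ J) J (0 - lam) (by linarith)
          hi.1.symm hb' (by rw [hshift]; exact le_of_eq e0) k hk h
        exact two_of Wp Wn hsign i _ hi.1 hb Jᶜ k l hk' (by simpa using hl) h hl'
      · obtain ⟨l, hl, hl'⟩ := dn_lem (Wp i) (Wn i) (ξ + lam • eJ J) J (0 - lam) (by linarith)
          hi.1 hb (by rw [hshift]; exact ge_of_eq e0) k hk h
        exact two_of Wp Wn hsign i _ hi.1 hb Jᶜ l k (by simpa using hl) hk' hl' h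
    have hc := core_count (tmod Wp Wn) hM hgen (ξ + lam • eJ J) J hJ hJ'
      (K.filter fun k => 2 ≤ (nbr (tmod Wp Wn) (ξ + lam • eJ J) k ∩ J).card)
      (K.filter fun k => 2 ≤ (nbr (tmod Wp Wn) (ξ + lam • eJ J) k ∩ Jᶜ).card)
      (fun k hk => (Finset.mem_filter.mp hk).2) (fun k hk => (Finset.mem_filter.mp hk).2)
    have hs : K ⊆
        (K.filter fun k => 2 ≤ (nbr (tmod Wp Wn) (ξ + lam • eJ J) k ∩ J).card) ∪
        (K.filter fun k => 2 ≤ (nbr (tmod Wp Wn) (ξ + lam • eJ J) k ∩ Jᶜ).card) := by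
      intro k hk
      rw [Finset.mem_union, Finset.mem_filter, Finset.mem_filter]
      rcases upn lam h0 h1 k (hKn lam h0.le h1.le k hk) with h | h
      · exact Or.inl ⟨hk, h⟩
      · exact Or.inr ⟨hk, h⟩
    have h3 := Finset.card_le_card hs
    have h4 := Finset.card_union_add_card_inter
      (K.filter fun k => 2 ≤ (nbr (tmod Wp Wn) (ξ + lam • eJ J) k ∩ J).card)
      (K.filter fun k => 2 ≤ (nbr (tmod Wp Wn) (ξ + lam • eJ J) k ∩ Jᶜ).card)
    have h5 : 0 < ((K.filter fun k => 2 ≤ (nbr (tmod Wp Wn) (ξ + lam • eJ J) k ∩ J).card) ∩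
      (K.filter fun k => 2 ≤ (nbr (tmod Wp Wn) (ξ + lam • eJ J) k ∩ Jᶜ).card)).card :=
      Finset.card_pos.mpr ⟨i, by
        rw [Finset.mem_inter, Finset.mem_filter, Finset.mem_filter]
        exact ⟨⟨hiK, c1⟩, ⟨hiK, c2⟩⟩⟩
    omega
  intro lam h0 h1
  have part1 : ∀ i, isHypNode Wp Wn (ξ + lam • eJ J) i ↔ i ∈ K :=
    fun i => ⟨int_sub lam h0 h1 i, hKn lam h0.le h1.le i⟩
  have hξ : ξ + (0:ℝ) • eJ J = ξ := by simp
  have part2 : ∀ i, (isHypNode Wp Wn ξ i ∧ isHypNode Wp Wn (ξ + μ • eJ J) i) ↔ i ∈ K := by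
    intro i
    constructor
    · rintro ⟨a, b⟩
      rw [← part1, hnode]
      refine le_antisymm ?_ ((hin lam h0.le h1.le).2 i)
      obtain ⟨j, hj⟩ := exists_tdot (Wp i) (ξ + lam • eJ J)
      rw [← hj]
      by_cases hjJ : j ∈ J
      · obtain ⟨k, hk⟩ := exists_tdot (Wn i) (ξ + μ • eJ J)
        have h := le_tdot (Wp i) (ξ + μ • eJ J) j
        rw [b.1, ← hk] at h
        refine le_trans ?_ (le_tdot (Wn i) (ξ + lam • eJ J) k)
        refine le_real (l := 0) h _ _ ?_
        rw [eJ_mem hjJ, eJ_mem hjJ]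
        by_cases hkJ : k ∈ J
        · rw [eJ_mem hkJ, eJ_mem hkJ]; linarith
        · rw [eJ_nmem hkJ, eJ_nmem hkJ]; linarith
      · obtain ⟨k, hk⟩ := exists_tdot (Wn i) ξ
        have h := le_tdot (Wp i) ξ j
        rw [a.1, ← hk] at h
        refine le_trans ?_ (le_tdot (Wn i) (ξ + lam • eJ J) k)
        refine le_real (l := 0) h _ _ ?_
        rw [eJ_nmem hjJ]
        by_cases hkJ : k ∈ J
        · rw [eJ_mem hkJ]; linarith
        · rw [eJ_nmem hkJ]; linarith
    · intro hi
      have := hKn 0 le_rfl hμ.le i hi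
      rw [hξ] at this
      exact ⟨this, hKn μ hμ.le le_rfl i hi⟩
  -- a breakpoint in the interior is impossible
  have brk : ∀ i ∈ K, ∀ j ∈ J, ∀ k, k ∉ J → ∀ s t : ℝ, 0 ≤ s → s ≤ t → t ≤ μ → (0 < s ∨ t < μ) →
      k ∈ nbr (tmod Wp Wn) (ξ + s • eJ J) i → j ∈ nbr (tmod Wp Wn) (ξ + t • eJ J) i →
      (j ∈ nbr (tmod Wp Wn) (ξ + s • eJ J) i ∧ s = 0) ∨
      (k ∈ nbr (tmod Wp Wn) (ξ + t • eJ J) i ∧ t = μ) := by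
    intro i hi j hj k hk s t hs hst ht hor hks hjt
    have hks' := (mem_nbr_iff _ _ _ _).mp hks
    have hjt' := (mem_nbr_iff _ _ _ _).mp hjt
    have hfin' : ∀ y l, l ∈ nbr (tmod Wp Wn) y i → tmod Wp Wn i l ≠ ⊥ := by
      intro y l hl h
      obtain ⟨p, hp⟩ := hM i
      have := (mem_nbr_iff _ _ _ _).mp hl p
      rw [h, WithBot.bot_add, le_bot_iff, WithBot.add_eq_bot] at this
      rcases this with h | h
      · exact hp h
      · exact WithBot.coe_ne_bot h
    obtain ⟨b, hb⟩ := WithBot.ne_bot_iff_exists.mp (hfin' _ _ hjt)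
    obtain ⟨a, ha⟩ := WithBot.ne_bot_iff_exists.mp (hfin' _ _ hks)
    -- breakpoint parameter
    have hd : ∃ d, d = (a + ξ k) - (b + ξ j) := ⟨_, rfl⟩
    obtain ⟨d, hd⟩ := hd
    have q1 := hks' j
    have q2 := hjt' k
    rw [← ha, ← hb, eJ_mem hj, eJ_nmem hk, ← WithBot.coe_add, ← WithBot.coe_add,
      WithBot.coe_le_coe] at q1 q2
    have hdk : k ∈ nbr (tmod Wp Wn) (ξ + d • eJ J) i := by
      rw [mem_nbr_iff]
      intro p
      by_cases hp : p ∈ J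
      · have h2 := le_real (l := 0) (hjt' p) ((ξ + d • eJ J) p) ((ξ + d • eJ J) j) (by
          rw [eJ_mem hp, eJ_mem hp, eJ_mem hj, eJ_mem hj]; linarith)
        refine h2.trans ?_
        rw [← ha, ← hb, eJ_mem hj, eJ_nmem hk, ← WithBot.coe_add, ← WithBot.coe_add,
          WithBot.coe_le_coe]
        linarith
      · have := hks' p
        rw [eJ_nmem hp, eJ_nmem hk] at this ⊢
        exact this
    have hdj : j ∈ nbr (tmod Wp Wn) (ξ + d • eJ J) i := by
      rw [mem_nbr_iff] at hdk ⊢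
      intro p
      refine (hdk p).trans ?_
      rw [← ha, ← hb, eJ_mem hj, eJ_nmem hk, ← WithBot.coe_add, ← WithBot.coe_add,
          WithBot.coe_le_coe]
      linarith
    have r1 : s ≤ d := by linarith
    have r2 : d ≤ t := by linarith
    by_cases z0 : d = 0
    · left
      have : s = 0 := by linarith
      rw [this, ← z0]; exact ⟨hdj, rfl⟩
    by_cases z1 : d = μ
    · right
      have : t = μ := by linarith
      rw [this, ← z1]; exact ⟨hdk, rfl⟩
    exact absurd (noboth d (lt_of_le_of_ne (by linarith) (Ne.symm z0))
      (lt_of_le_of_ne (by linarith) z1) i hi j hj k hk hdj hdk) id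
  have nbr_iff : ∀ i ∈ K, ∀ j, j ∈ nbr (tmod Wp Wn) (ξ + lam • eJ J) i ↔
      (j ∈ nbr (tmod Wp Wn) (ξ + (0:ℝ) • eJ J) i ∧ j ∈ nbr (tmod Wp Wn) (ξ + μ • eJ J) i) := by
    intro i hi j
    constructor
    · intro h
      have h' := (mem_nbr_iff _ _ _ _).mp h
      -- transfer inside the same side
      have same : ∀ (t : ℝ) p, (p ∈ J ↔ j ∈ J) → p ∈ nbr (tmod Wp Wn) (ξ + t • eJ J) i →
          j ∈ nbr (tmod Wp Wn) (ξ + t • eJ J) i := by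
        intro t p hp hpn
        rw [mem_nbr_iff] at hpn ⊢
        intro q
        refine (hpn q).trans (le_real (l := 0) (h' p) _ _ ?_)
        by_cases hj : j ∈ J
        · rw [eJ_mem hj, eJ_mem hj, eJ_mem (hp.mpr hj), eJ_mem (hp.mpr hj)]; linarith
        · have hp' : p ∉ J := fun h => hj (hp.mp h)
          rw [eJ_nmem hj, eJ_nmem hj, eJ_nmem hp', eJ_nmem hp']; linarith
      have ex : ∀ t : ℝ, ∃ p, p ∈ nbr (tmod Wp Wn) (ξ + t • eJ J) i := by
        intro t
        obtain ⟨p, hp⟩ := exists_tdot (tmod Wp Wn i) (ξ + t • eJ J)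
        exact ⟨p, Finset.mem_filter.mpr ⟨Finset.mem_univ _, hp⟩⟩
      by_cases hj : j ∈ J
      · constructor
        · obtain ⟨p, hp⟩ := ex 0
          by_cases hpJ : p ∈ J
          · exact same 0 p (by simp [hj, hpJ]) hp
          · rcases brk i hi j hj p hpJ 0 lam le_rfl h0.le h1.le (Or.inr h1) hp h with h | h
            · exact h.1
            · linarith [h.2]
        · rw [mem_nbr_iff]
          intro p
          refine le_real (l := 0) (h' p) _ _ ?_
          rw [eJ_mem hj, eJ_mem hj]
          by_cases hpJ : p ∈ J
          · rw [eJ_mem hpJ, eJ_mem hpJ]; linarith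
          · rw [eJ_nmem hpJ, eJ_nmem hpJ]; linarith
      · constructor
        · rw [mem_nbr_iff]
          intro p
          refine le_real (l := 0) (h' p) _ _ ?_
          rw [eJ_nmem hj, eJ_nmem hj]
          by_cases hpJ : p ∈ J
          · rw [eJ_mem hpJ, eJ_mem hpJ]; linarith
          · rw [eJ_nmem hpJ, eJ_nmem hpJ]; linarith
        · obtain ⟨p, hp⟩ := ex μ
          by_cases hpJ : p ∈ J
          · rcases brk i hi p hpJ j hj lam μ h0.le h1.le le_rfl (Or.inl h0) h hp with h | h
            · linarith [h.2]
            · exact h.1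
          · exact same μ p (by simp [hj, hpJ]) hp
    · rintro ⟨a, b⟩
      rw [mem_nbr_iff] at a b ⊢
      intro p
      by_cases hj : j ∈ J
      · refine le_real (l := 0) (a p) _ _ ?_
        rw [eJ_mem hj, eJ_mem hj]
        by_cases hpJ : p ∈ J
        · rw [eJ_mem hpJ, eJ_mem hpJ]; linarith
        · rw [eJ_nmem hpJ, eJ_nmem hpJ]; linarith
      · refine le_real (l := 0) (b p) _ _ ?_
        rw [eJ_nmem hj, eJ_nmem hj]
        by_cases hpJ : p ∈ J
        · rw [eJ_mem hpJ, eJ_mem hpJ]; linarith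
        · rw [eJ_nmem hpJ, eJ_nmem hpJ]; linarith
  rw [hξ] at nbr_iff
  have tedge : ∀ x i j, isTEdge Wp Wn x i j ↔
      (isHypNode Wp Wn x i ∧ j ∈ nbr (tmod Wp Wn) x i) := by
    intro x i j; simp [isTEdge, nbr]
  have edge_iff : ∀ i j, isTEdge Wp Wn (ξ + lam • eJ J) i j ↔
      (isTEdge Wp Wn ξ i j ∧ isTEdge Wp Wn (ξ + μ • eJ J) i j) := by
    intro i j
    rw [tedge, tedge, tedge, part1]
    constructor
    · rintro ⟨hi, h⟩
      obtain ⟨a, b⟩ := (part2 i).mpr hi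
      obtain ⟨c, d⟩ := (nbr_iff i hi j).mp h
      exact ⟨⟨a, c⟩, ⟨b, d⟩⟩
    · rintro ⟨⟨a, c⟩, ⟨b, d⟩⟩
      have hi := (part2 i).mp ⟨a, b⟩
      exact ⟨hi, (nbr_iff i hi j).mpr ⟨c, d⟩⟩
  refine ⟨part1, part2, ?_⟩
  intro u v
  rcases u with i | j <;> rcases v with i' | j' <;> simp only [arcRel, edge_iff] <;> tauto
end
end

section
/- Let [ξ, ξ'] = {ξ + λe^J : 0 ≤ λ ≤ μ} (with μ > 0) be an ordinary segment of the tropical edge E_K whose endpoint ξ is a tropical basic point, ξ = x^{K∪{ℓ}} with ℓ ∈ [m]∖K. Then the common tangent digraph D_{]ξ,ξ'[} of the points of the open segment {ξ + λe^J : 0 < λ < μ} is obtained from D_ξ by deleting the hyperplane node ℓ and its incident arcs. -/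
open scoped Classical

noncomputable section

/-- Edge predicate, in real terms: `j` attains the maximum of `w + x`. -/
def Ed {N : ℕ} (w : Fin N → TT) (x : Fin N → ℝ) (j : Fin N) : Prop :=
  ∃ r : ℝ, w j = (r : TT) ∧ ∀ (l : Fin N) (s : ℝ), w l = (s : TT) → s + x l ≤ r + x j

theorem Ed.le {N : ℕ} {w : Fin N → TT} {x : Fin N → ℝ} {j : Fin N} (h : Ed w x j)
    {r : ℝ} (hr : w j = (r : TT)) (l : Fin N) : w l ≤ ((r + x j - x l : ℝ) : TT) := by
  obtain ⟨r', h1, h2⟩ := h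
  have hrr : r' = r := by
    rw [h1] at hr; exact WithBot.coe_injective hr
  subst hrr
  induction hl : w l using WithBot.recBotCoe with
  | bot => exact bot_le
  | coe s =>
    have := h2 l s hl
    exact WithBot.coe_le_coe.mpr (by linarith)

theorem Ed.eq_of {N : ℕ} {w : Fin N → TT} {x : Fin N → ℝ} {j k : Fin N} (h : Ed w x j)
    (hk : Ed w x k)
    {r : ℝ} (hr : w j = (r : TT)) : w k = ((r + x j - x k : ℝ) : TT) := by
  obtain ⟨s, h1, h2⟩ := hk
  obtain ⟨r', h3, h4⟩ := h
  have hrr : r' = r := by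
    rw [h3] at hr; exact WithBot.coe_injective hr
  subst hrr
  rw [h1]
  have := h2 j r' h3
  have := h4 k s h1
  congr 1
  linarith

theorem two_match {m N : ℕ} {M : Fin m → Fin N → TT} (hgen : TropGeneric M)
    (x : Fin N → ℝ) (P : Type) [Fintype P] (r : P → Fin m) (hr : Function.Injective r)
    (c : P → Fin N) (hc : Function.Injective c) (g : P ≃ P)
    (h1 : ∀ p, Ed (M (r p)) x (c p)) (h2 : ∀ p, Ed (M (r (g p))) x (c p))
    (hne : ∃ p, g p ≠ p) : False := by
  let e : Fin (Fintype.card P) ≃ P := (Fintype.equivFin P).symm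
  have hR : ∀ p, ∃ s : ℝ, M (r p) (c p) = (s : TT) := fun p => by
    obtain ⟨s, hs, _⟩ := h1 p; exact ⟨s, hs⟩
  choose R hR using hR
  let A : Fin (Fintype.card P) → Fin (Fintype.card P) → TT :=
    fun i j => M (r (e i)) (c (e j))
  let V : ℝ := ∑ a, (R (e a) + x (c (e a))) - ∑ a, x (c (e a))
  have hle : ∀ σ : Equiv.Perm (Fin (Fintype.card P)), ∑ i, A i (σ i) ≤ (V : TT) := by
    intro σ
    have : ∑ i, A i (σ i) ≤ ∑ i, ((R (e i) + x (c (e i)) - x (c (e (σ i))) : ℝ) : TT) :=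
      Finset.sum_le_sum fun i _ => (h1 (e i)).le (hR (e i)) _
    refine this.trans (le_of_eq ?_)
    rw [← WithBot.coe_sum, Finset.sum_sub_distrib, Equiv.sum_comp σ (fun a => x (c (e a)))]
  let π : Equiv.Perm (Fin (Fintype.card P)) := e.trans (g.symm.trans e.symm)
  have hid : ∑ i, A i ((1 : Equiv.Perm (Fin (Fintype.card P))) i) = (V : TT) := by
    have : ∀ i, A i ((1 : Equiv.Perm (Fin (Fintype.card P))) i) = ((R (e i) : ℝ) : TT) :=
      fun i => hR (e i)
    simp only [this]
    rw [← WithBot.coe_sum]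
    congr 1
    simp [V, Finset.sum_add_distrib]
  have hpi : ∑ i, A i (π i) = (V : TT) := by
    have : ∀ i, A i (π i) = ((R (e i) + x (c (e i)) - x (c (e (π i))) : ℝ) : TT) := by
      intro i
      have h3 : Ed (M (r (e i))) x (c (e (π i))) := by
        have := h2 (g.symm (e i))
        simpa [π] using this
      exact (h1 (e i)).eq_of h3 (hR (e i))
    simp only [this]
    rw [← WithBot.coe_sum, Finset.sum_sub_distrib, Equiv.sum_comp π (fun a => x (c (e a)))]
  have ht : tper A = (V : TT) := by
    apply le_antisymm
    · exact Finset.sup_le fun σ _ => hle σ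
    · rw [← hid]
      exact Finset.le_sup (f := fun σ : Equiv.Perm (Fin (Fintype.card P)) => ∑ i, A i (σ i))
        (Finset.mem_univ _)
  rcases hgen _ (fun i => r (e i)) (fun i => c (e i)) (hr.comp e.injective)
    (hc.comp e.injective) with h | h
  · have : tper A = ⊥ := h
    rw [ht] at this
    exact WithBot.coe_ne_bot this
  · apply h
    right
    refine ⟨1, π, ?_, hid.trans ht.symm, hpi.trans ht.symm⟩
    intro h
    obtain ⟨p, hp⟩ := hne
    apply hp
    have := congrArg (fun σ : Equiv.Perm (Fin (Fintype.card P)) => σ (e.symm (g p))) h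
    simpa [π] using this

theorem no_circ {m N : ℕ} {M : Fin m → Fin N → TT} (hgen : TropGeneric M)
    (x : Fin N → ℝ) (y : Fin m → Fin N → ℝ) (hy : ∀ i j, y i j ≠ 0 → Ed (M i) x j)
    (hrow : ∀ i, ∑ j, y i j = 0) (hcol : ∀ j, ∑ i, y i j = 0) : ∀ i j, y i j = 0 := by
  by_contra! hcon
  obtain ⟨i0, j0, h0⟩ := hcon
  let T := {i : Fin m // ∃ j, y i j ≠ 0}
  have hneg : ∀ t : T, ∃ j, y t.1 j < 0 := by
    rintro ⟨i, j, hj⟩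
    obtain ⟨j', _, h'⟩ := Finset.exists_pos_of_sum_zero_of_exists_nonzero (s := Finset.univ)
      (fun j => - y i j) (by simp [hrow i]) ⟨j, Finset.mem_univ _, by simpa using hj⟩
    exact ⟨j', by simpa using h'⟩
  choose c hc using hneg
  have hpos : ∀ t : T, ∀ j, y t.1 j < 0 → ∃ i, 0 < y i j := by
    intro t j hj
    obtain ⟨i, _, h'⟩ := Finset.exists_pos_of_sum_zero_of_exists_nonzero (s := Finset.univ)
      (fun i => y i j) (hcol j) ⟨t.1, Finset.mem_univ _, hj.ne⟩
    exact ⟨i, h'⟩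
  have hd : ∀ j : Fin N, ∃ s : T, (∃ t : T, y t.1 j < 0) → 0 < y s.1 j := by
    intro j
    by_cases h : ∃ t : T, y t.1 j < 0
    · obtain ⟨t, ht⟩ := h
      obtain ⟨i, hi⟩ := hpos t j ht
      exact ⟨⟨i, j, hi.ne'⟩, fun _ => hi⟩
    · exact ⟨⟨i0, j0, h0⟩, fun h' => absurd h' h⟩
  choose d hd using hd
  let g : T → T := fun t => d (c t)
  have hg : ∀ t, 0 < y (g t).1 (c t) := fun t => hd (c t) ⟨t, hc t⟩
  let P := {t : T // t ∈ Function.periodicPts g}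
  have hbij := Function.bijOn_periodicPts (f := g)
  have hPne : ∃ t, t ∈ Function.periodicPts g := by
    obtain ⟨a, b, hab, he⟩ := Finite.exists_ne_map_eq_of_infinite
      (fun n : ℕ => g^[n] ⟨i0, j0, h0⟩)
    wlog hlt : a < b generalizing a b
    · exact this b a hab.symm he.symm (by omega)
    refine ⟨g^[a] ⟨i0, j0, h0⟩, Function.mk_mem_periodicPts (n := b - a) (by omega) ?_⟩
    unfold Function.IsPeriodicPt Function.IsFixedPt
    rw [← Function.iterate_add_apply]
    have : b - a + a = b := by omega
    rw [this]
    exact he.symm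
  let G : P ≃ P := hbij.equiv
  have hG : ∀ p : P, (G p).1 = g p.1 := fun p => rfl
  refine two_match hgen x P (fun p => p.1.1) ?_ (fun p => c p.1) ?_ G ?_ ?_ ?_
  · intro p q h
    exact Subtype.ext (Subtype.ext h)
  · intro p q h
    apply G.injective
    apply Subtype.ext
    rw [hG, hG]
    exact congrArg d h
  · intro p
    exact hy _ _ (hc p.1).ne
  · intro p
    rw [hG]
    exact hy _ _ (hg p.1).ne'
  · obtain ⟨t, ht⟩ := hPne
    refine ⟨⟨t, ht⟩, fun h => ?_⟩
    have h1 : g t = t := congrArg Subtype.val h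
    have h2 := hg t
    have h3 := hc t
    rw [h1] at h2
    linarith

theorem count_gen {m N : ℕ} {M : Fin m → Fin N → TT} (hgen : TropGeneric M)
    (x : Fin N → ℝ) (ι : Type) [Fintype ι] (r : ι → Fin m) (a b : ι → Fin N)
    (ha : ∀ t, Ed (M (r t)) x (a t)) (hb : ∀ t, Ed (M (r t)) x (b t))
    (side : Fin N → Prop) (hside : ∀ t, side (a t) ↔ side (b t))
    (T : Finset (Fin N)) (hT : ∀ i ∈ T, ∀ j ∈ T, (side i ↔ side j) → i = j)
    (hind : ∀ c : ι → ℝ, (∀ i j, (∑ t, if r t = i then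
      c t * ((if a t = j then 1 else 0) - (if b t = j then 1 else 0)) else 0) = 0) → c = 0) :
    Fintype.card ι + T.card ≤ N := by
  by_contra! hlt
  let D : ι → Fin N → ℝ := fun t j => (if a t = j then 1 else 0) - (if b t = j then 1 else 0)
  let F : (ι → ℝ) →ₗ[ℝ] ({j // j ∉ T} → ℝ) :=
    { toFun := fun c j => ∑ t, c t * D t j.1
      map_add' := by
        intro c c'; ext j; simp [add_mul, Finset.sum_add_distrib]
      map_smul' := by
        intro s c; ext j; simp [mul_assoc, Finset.mul_sum] }
  have hker : LinearMap.ker F ≠ ⊥ := by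
    apply LinearMap.ker_ne_bot_of_finrank_lt
    simp only [Module.finrank_fintype_fun_eq_card, Fintype.card_subtype_compl, Fintype.card_fin,
      Fintype.card_coe]
    have := Finset.card_le_univ T
    simp only [Fintype.card_fin] at this
    omega
  obtain ⟨c, hc, hc0⟩ := (Submodule.ne_bot_iff _).mp hker
  have hoff : ∀ j, j ∉ T → ∑ t, c t * D t j = 0 := by
    intro j hj
    exact congrFun (LinearMap.mem_ker.mp hc) ⟨j, hj⟩
  have hall : ∀ j, ∑ t, c t * D t j = 0 := by
    intro j
    by_cases hj : j ∈ T
    · have hs : ∑ l ∈ Finset.univ.filter (fun l => side l ↔ side j), ∑ t, c t * D t l = 0 := by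
        rw [Finset.sum_comm]
        apply Finset.sum_eq_zero
        intro t _
        rw [← Finset.mul_sum]
        simp only [D, Finset.sum_sub_distrib, Finset.sum_ite_eq, Finset.mem_filter,
          Finset.mem_univ, true_and, hside t, sub_self, mul_zero]
      rw [Finset.sum_eq_single j] at hs
      · exact hs
      · intro l hl hlj
        apply hoff
        intro hlT
        exact hlj (hT l hlT j hj (by simpa using hl))
      · simp
    · exact hoff j hj
  apply hc0
  apply hind
  refine no_circ hgen x _ ?_ ?_ ?_
  · intro i j hne
    obtain ⟨t, _, ht⟩ := Finset.exists_ne_zero_of_sum_ne_zero hne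
    by_cases h1 : r t = i
    · by_cases h2 : a t = j
      · rw [← h1, ← h2]; exact ha t
      · by_cases h3 : b t = j
        · rw [← h1, ← h3]; exact hb t
        · exfalso; apply ht; rw [if_pos h1, if_neg h2, if_neg h3]; ring
    · exact absurd (if_neg h1) ht
  · intro i
    rw [Finset.sum_comm]
    apply Finset.sum_eq_zero
    intro t _
    by_cases h : r t = i
    · simp [h, ← Finset.mul_sum, Finset.sum_sub_distrib]
    · simp [h]
  · intro j
    rw [Finset.sum_comm]
    refine Eq.trans ?_ (hall j)
    apply Finset.sum_congr rfl
    intro t _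
    simp [D]

theorem count_one {m N : ℕ} {M : Fin m → Fin N → TT} (hgen : TropGeneric M)
    (x : Fin N → ℝ) (S : Finset (Fin m)) (a b : Fin m → Fin N)
    (hab : ∀ i ∈ S, a i ≠ b i ∧ Ed (M i) x (a i) ∧ Ed (M i) x (b i))
    (side : Fin N → Prop) (hside : ∀ i ∈ S, (side (a i) ↔ side (b i)))
    (T : Finset (Fin N)) (hT : ∀ i ∈ T, ∀ j ∈ T, (side i ↔ side j) → i = j) :
    S.card + T.card ≤ N := by
  have := count_gen hgen x S (fun t => t.1) (fun t => a t.1) (fun t => b t.1)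
    (fun t => (hab t.1 t.2).2.1) (fun t => (hab t.1 t.2).2.2) side (fun t => hside t.1 t.2) T hT ?_
  · simpa using this
  · intro c hc
    ext s
    have := hc s.1 (a s.1)
    rw [Finset.sum_eq_single s] at this
    · simpa [(hab s.1 s.2).1.symm] using this
    · intro t _ hts
      exact if_neg fun h => hts (Subtype.ext h)
    · simp

theorem count_two {m N : ℕ} {M : Fin m → Fin N → TT} (hgen : TropGeneric M)
    (x : Fin N → ℝ) (S : Finset (Fin m)) (a b : Fin m → Fin N)
    (hab : ∀ i ∈ S, a i ≠ b i ∧ Ed (M i) x (a i) ∧ Ed (M i) x (b i))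
    (side : Fin N → Prop) (hside : ∀ i ∈ S, (side (a i) ↔ side (b i)))
    (T : Finset (Fin N)) (hT : ∀ i ∈ T, ∀ j ∈ T, (side i ↔ side j) → i = j)
    (k : Fin m) (p q : Fin N) (hp : Ed (M k) x p) (hq : Ed (M k) x q)
    (hpq : side p ↔ side q) (h1 : p ≠ q) (h2 : a k ≠ q) (h3 : b k ≠ q) :
    S.card + 1 + T.card ≤ N := by
  have := count_gen hgen x (Option S) (fun t => t.elim k (fun t => t.1))
    (fun t => t.elim p (fun t => a t.1)) (fun t => t.elim q (fun t => b t.1))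
    (by rintro (_ | t); exacts [hp, (hab t.1 t.2).2.1])
    (by rintro (_ | t); exacts [hq, (hab t.1 t.2).2.2]) side
    (by rintro (_ | t); exacts [hpq, hside t.1 t.2]) T hT ?_
  · simpa using this
  · intro c hc
    simp only [Fintype.sum_option, Option.elim] at hc
    have hn : c none = 0 := by
      have := hc k q
      rw [Finset.sum_eq_zero] at this
      · simpa [h1] using this
      · intro t _
        by_cases ht : t.1 = k
        · simp [ht, h2, h3]
        · simp [ht]
    funext o
    rcases o with _ | s
    · exact hn
    have := hc s.1 (a s.1)
    rw [Finset.sum_eq_single s] at this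
    · simpa [(hab s.1 s.2).1.symm, hn] using this
    · intro t _ hts
      exact if_neg fun h => hts (Subtype.ext h)
    · simp

theorem tdot_eq_iff {n : ℕ} (w : Fin (n + 1) → TT) (x : Fin (n + 1) → ℝ)
    (hw : ∃ j, w j ≠ ⊥) (j : Fin (n + 1)) :
    w j + (x j : TT) = tdot w (toT x) ↔ Ed w x j := by
  have hle : ∀ l, w l + (x l : TT) ≤ tdot w (toT x) := fun l =>
    Finset.le_sup (f := fun j => w j + toT x j) (Finset.mem_univ l)
  constructor
  · intro h
    obtain ⟨j0, hj0⟩ := hw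
    obtain ⟨r0, hr0⟩ := WithBot.ne_bot_iff_exists.mp hj0
    have hne : w j ≠ ⊥ := by
      intro hb
      have h2 := hle j0
      rw [← h, hb, ← hr0, WithBot.bot_add, ← WithBot.coe_add] at h2
      exact WithBot.coe_ne_bot (le_bot_iff.mp h2)
    obtain ⟨r, hr⟩ := WithBot.ne_bot_iff_exists.mp hne
    refine ⟨r, hr.symm, fun l s hs => ?_⟩
    have h2 := hle l
    rw [← h, ← hr, hs, ← WithBot.coe_add, ← WithBot.coe_add] at h2
    exact WithBot.coe_le_coe.mp h2
  · rintro ⟨r, hr, h⟩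
    apply le_antisymm (hle j)
    apply Finset.sup_le
    intro l _
    induction hl : w l using WithBot.recBotCoe with
    | bot => rw [WithBot.bot_add]; exact bot_le
    | coe s =>
      rw [hr]
      show ((s : ℝ) : TT) + ((x l : ℝ) : TT) ≤ _
      rw [← WithBot.coe_add, ← WithBot.coe_add]
      exact WithBot.coe_le_coe.mpr (h l s hl)

theorem ex_arg {n : ℕ} (u v : Fin (n + 1) → TT) (x : Fin (n + 1) → ℝ)
    (h : tdot v (toT x) ≤ tdot u (toT x)) (hr : ∃ j, max (u j) (v j) ≠ ⊥) :
    ∃ j, Ed (fun j => max (u j) (v j)) x j ∧ u j ≠ ⊥ := by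
  obtain ⟨j, _, hj⟩ := Finset.exists_mem_eq_sup (Finset.univ : Finset (Fin (n + 1)))
    Finset.univ_nonempty (fun j => u j + toT x j)
  have hj' : tdot u (toT x) = u j + (x j : TT) := hj
  have hle : ∀ l, max (u l) (v l) + (x l : TT) ≤ u j + (x j : TT) := by
    intro l
    rw [← hj']
    rcases max_choice (u l) (v l) with hm | hm
    · rw [hm]
      exact Finset.le_sup (f := fun j => u j + toT x j) (Finset.mem_univ l)
    · rw [hm]
      exact le_trans (Finset.le_sup (f := fun j => v j + toT x j) (Finset.mem_univ l)) h
  refine ⟨j, (tdot_eq_iff _ x hr j).mp ?_, ?_⟩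
  · apply le_antisymm
    · exact Finset.le_sup (f := fun j => max (u j) (v j) + toT x j) (Finset.mem_univ j)
    · apply Finset.sup_le
      intro l _
      exact (hle l).trans (add_le_add_left (le_max_left _ _) _)
  · intro hb
    obtain ⟨j0, hj0⟩ := hr
    obtain ⟨r0, hr0⟩ := WithBot.ne_bot_iff_exists.mp hj0
    have h2 := hle j0
    rw [hb, ← hr0, WithBot.bot_add, ← WithBot.coe_add] at h2
    exact WithBot.coe_ne_bot (le_bot_iff.mp h2)

theorem pt_in {n : ℕ} (ξ : Fin (n + 1) → ℝ) {J : Finset (Fin (n + 1))} (lam : ℝ)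
    {j : Fin (n + 1)} (h : j ∈ J) : (ξ + lam • eJ J) j = ξ j + lam := by
  simp [eJ, h]

theorem pt_out {n : ℕ} (ξ : Fin (n + 1) → ℝ) {J : Finset (Fin (n + 1))} (lam : ℝ)
    {j : Fin (n + 1)} (h : j ∉ J) : (ξ + lam • eJ J) j = ξ j := by
  simp [eJ, h]

theorem move_right {n : ℕ} {w : Fin (n + 1) → TT} {ξ : Fin (n + 1) → ℝ}
    {J : Finset (Fin (n + 1))} {a b : ℝ} (hab : a < b) {j0 j : Fin (n + 1)} (hj0 : j0 ∈ J)
    (h0 : Ed w (ξ + a • eJ J) j0) (h : Ed w (ξ + b • eJ J) j) :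
    j ∈ J ∧ Ed w (ξ + a • eJ J) j := by
  obtain ⟨r0, hr0, h0⟩ := h0
  obtain ⟨r, hr, h⟩ := h
  have h1 := h j0 r0 hr0
  have h2 := h0 j r hr
  rw [pt_in ξ _ hj0] at h1 h2
  by_cases hj : j ∈ J
  · rw [pt_in ξ _ hj] at h1 h2
    refine ⟨hj, r, hr, fun l s hs => ?_⟩
    have h3 := h0 l s hs
    rw [pt_in ξ _ hj0] at h3
    rw [pt_in ξ _ hj]
    linarith
  · rw [pt_out ξ _ hj] at h1 h2
    linarith

theorem move_left {n : ℕ} {w : Fin (n + 1) → TT} {ξ : Fin (n + 1) → ℝ}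
    {J : Finset (Fin (n + 1))} {a b : ℝ} (hab : a < b) {j0 j : Fin (n + 1)} (hj0 : j0 ∉ J)
    (h0 : Ed w (ξ + b • eJ J) j0) (h : Ed w (ξ + a • eJ J) j) :
    j ∉ J ∧ Ed w (ξ + b • eJ J) j := by
  obtain ⟨r0, hr0, h0⟩ := h0
  obtain ⟨r, hr, h⟩ := h
  have h1 := h j0 r0 hr0
  have h2 := h0 j r hr
  rw [pt_out ξ _ hj0] at h1 h2
  by_cases hj : j ∈ J
  · rw [pt_in ξ _ hj] at h1 h2
    linarith
  · rw [pt_out ξ _ hj] at h1 h2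
    refine ⟨hj, r, hr, fun l s hs => ?_⟩
    have h3 := h0 l s hs
    rw [pt_out ξ _ hj0] at h3
    rw [pt_out ξ _ hj]
    linarith

/-- two points on the same side, one maximal at both parameters. -/
theorem Ed.transfer {n : ℕ} {w : Fin (n + 1) → TT} {ξ : Fin (n + 1) → ℝ}
    {J : Finset (Fin (n + 1))} {a b : ℝ} {j0 j : Fin (n + 1)} (hs : j0 ∈ J ↔ j ∈ J)
    (h0 : Ed w (ξ + a • eJ J) j0) (h : Ed w (ξ + a • eJ J) j)
    (h0' : Ed w (ξ + b • eJ J) j0) : Ed w (ξ + b • eJ J) j := by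
  obtain ⟨r0, hr0, h0⟩ := h0
  obtain ⟨r, hr, h⟩ := h
  obtain ⟨r1, hr1, h0'⟩ := h0'
  have : r0 = r1 := WithBot.coe_injective (hr0.symm.trans hr1)
  subst this
  refine ⟨r, hr, fun l s hs' => ?_⟩
  have h1 := h j0 r0 hr0
  have h2 := h0 j r hr
  have h3 := h0' l s hs'
  by_cases hj : j ∈ J
  · rw [pt_in ξ _ hj] at *
    rw [pt_in ξ _ (hs.mpr hj)] at *
    linarith
  · rw [pt_out ξ _ hj] at *
    rw [pt_out ξ _ (fun h => hj (hs.mp h))] at *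
    linarith

theorem crossing {n : ℕ} {w : Fin (n + 1) → TT} {ξ : Fin (n + 1) → ℝ}
    {J : Finset (Fin (n + 1))} {b : ℝ} {j0 j1 : Fin (n + 1)}
    (hj0 : j0 ∉ J) (hj1 : j1 ∈ J)
    (h0 : Ed w (ξ + (0 : ℝ) • eJ J) j0) (h1 : Ed w (ξ + b • eJ J) j1) :
    ∃ d, 0 ≤ d ∧ d ≤ b ∧ Ed w (ξ + d • eJ J) j0 ∧ Ed w (ξ + d • eJ J) j1 := by
  obtain ⟨r0, hr0, h0⟩ := h0
  obtain ⟨r1, hr1, h1⟩ := h1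
  have e0 := h0 j1 r1 hr1
  have e1 := h1 j0 r0 hr0
  rw [pt_in ξ _ hj1, pt_out ξ _ hj0] at e0 e1
  have key : ∀ l (s : ℝ), w l = (s : TT) →
      s + (ξ + (r0 + ξ j0 - (r1 + ξ j1)) • eJ J) l ≤ r0 + ξ j0 := by
    intro l s hs
    have e2 := h0 l s hs
    have e3 := h1 l s hs
    rw [pt_out ξ _ hj0] at e2
    rw [pt_in ξ _ hj1] at e3
    by_cases hl : l ∈ J
    · rw [pt_in ξ _ hl] at *
      linarith
    · rw [pt_out ξ _ hl] at *
      linarith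
  refine ⟨r0 + ξ j0 - (r1 + ξ j1), by linarith, by linarith, ⟨r0, hr0, fun l s hs => ?_⟩,
    ⟨r1, hr1, fun l s hs => ?_⟩⟩
  · rw [pt_out ξ _ hj0]; exact key l s hs
  · rw [pt_in ξ _ hj1]
    have := key l s hs
    linarith

/-- If the initial endpoint `ξ` of an ordinary segment of
`E_K` is the tropical basic point `x^{K∪{ℓ}}`, then the common tangent digraph
on the open segment is obtained from `D_ξ` by deleting the hyperplane node `ℓ`
and its incident arcs. -/
theorem stmt15 {m n : ℕ} (Wp Wn : Fin m → Fin (n + 1) → TT)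
    (hsign : ∀ i j, min (Wp i j) (Wn i j) = ⊥)
    (hrow : ∀ i, ∃ j, max (Wp i j) (Wn i j) ≠ ⊥)
    (hgen : TropGeneric (tmod Wp Wn))
    (hfin : ∀ x ∈ coneC Wp Wn, x ≠ (fun _ => (⊥ : TT)) → ∀ j, x j ≠ ⊥)
    (K : Finset (Fin m)) (hK : K.card + 1 = n)
    (hU : ∃ (er : Fin K.card → Fin m) (ec : Fin K.card → Fin (n + 1)),
      Function.Injective er ∧ (∀ a, er a ∈ K) ∧ Function.Injective ec ∧
      (∀ a, ec a ≠ Fin.last n) ∧ ⊥ < tper (fun a b => tmod Wp Wn (er a) (ec b)))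
    (hEK : ∃ y : Fin (n + 1) → ℝ, toT y ∈ edgeEK Wp Wn K)
    (ξ : Fin (n + 1) → ℝ) (J : Finset (Fin (n + 1))) (μ : ℝ)
    (hseg : IsOrdSeg Wp Wn K ξ J μ)
    (ℓ : Fin m) (hℓ : ℓ ∉ K) (hbasic : toT ξ ∈ edgeEK Wp Wn (insert ℓ K)) :
    ∀ lam : ℝ, 0 < lam → lam < μ →
      (∀ i, isHypNode Wp Wn (ξ + lam • eJ J) i ↔
        (isHypNode Wp Wn ξ i ∧ i ≠ ℓ)) ∧
      (∀ u v, arcRel Wp Wn (ξ + lam • eJ J) u v ↔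
        (arcRel Wp Wn ξ u v ∧ u ≠ Sum.inl ℓ ∧ v ≠ Sum.inl ℓ)) := by
  obtain ⟨hμ, hJ0, hJ1, hE, -, -⟩ := hseg
  have hz : ξ + (0 : ℝ) • eJ J = ξ := by simp
  have Ppos : ∀ x : Fin (n + 1) → ℝ, toT x ∈ coneC Wp Wn → ∀ i,
      ∃ j, Ed (tmod Wp Wn i) x j ∧ Wp i j ≠ ⊥ := fun x hx i =>
    ex_arg (Wp i) (Wn i) x (hx i) (hrow i)
  have Pneg : ∀ (x : Fin (n + 1) → ℝ) (i : Fin m),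
      tdot (Wp i) (toT x) = tdot (Wn i) (toT x) →
      ∃ j, Ed (tmod Wp Wn i) x j ∧ Wn i j ≠ ⊥ := by
    intro x i h
    have h2 := ex_arg (Wn i) (Wp i) x h.le (by simpa only [max_comm] using hrow i)
    have h3 : (fun j => max (Wn i j) (Wp i j)) = tmod Wp Wn i := by
      funext j; exact max_comm _ _
    rwa [h3] at h2
  have hdiff : ∀ i j1 j2, Wp i j1 ≠ ⊥ → Wn i j2 ≠ ⊥ → j1 ≠ j2 := by
    rintro i j1 j2 h1 h2 rfl
    rcases min_eq_bot.mp (hsign i j1) with h | h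
    · exact h1 h
    · exact h2 h
  have hEc : ∀ lam : ℝ, 0 ≤ lam → lam ≤ μ → toT (ξ + lam • eJ J) ∈ coneC Wp Wn :=
    fun lam h1 h2 => (hE lam h1 h2).2
  have hEk : ∀ lam : ℝ, 0 ≤ lam → lam ≤ μ → ∀ k ∈ K,
      tdot (Wp k) (toT (ξ + lam • eJ J)) = tdot (Wn k) (toT (ξ + lam • eJ J)) :=
    fun lam h1 h2 k hk => (hE lam h1 h2).1 k hk
  obtain ⟨s0, hs0⟩ := Finset.nonempty_iff_ne_empty.mpr hJ0
  obtain ⟨s1, hs1⟩ : ∃ j, j ∉ J := by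
    by_contra! h
    exact hJ1 (Finset.eq_univ_iff_forall.mpr h)
  have hs01 : s0 ≠ s1 := fun h => hs1 (h ▸ hs0)
  have hTcard : ({s0, s1} : Finset (Fin (n + 1))).card = 2 := Finset.card_pair hs01
  have hT : ∀ i ∈ ({s0, s1} : Finset (Fin (n + 1))), ∀ j ∈ ({s0, s1} : Finset (Fin (n + 1))),
      (i ∈ J ↔ j ∈ J) → i = j := by
    intro i hi j hj h
    simp only [Finset.mem_insert, Finset.mem_singleton] at hi hj
    rcases hi with rfl | rfl <;> rcases hj with rfl | rfl
    · rfl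
    · exact absurd (h.mp hs0) hs1
    · exact absurd (h.mpr hs0) hs1
    · rfl
  have pairK : ∀ lam : ℝ, 0 ≤ lam → lam < μ → ∀ k ∈ K, ∃ a b, a ≠ b ∧
      Ed (tmod Wp Wn k) (ξ + lam • eJ J) a ∧ Ed (tmod Wp Wn k) (ξ + lam • eJ J) b ∧
      (a ∈ J ↔ b ∈ J) ∧ ((∃ j ∈ J, Ed (tmod Wp Wn k) (ξ + lam • eJ J) j) → a ∈ J) := by
    intro lam h0 h1 k hk
    by_cases h : ∃ j ∈ J, Ed (tmod Wp Wn k) (ξ + lam • eJ J) j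
    · obtain ⟨j, hj, hej⟩ := h
      obtain ⟨a, ha, ha'⟩ := Ppos _ (hEc μ hμ.le le_rfl) k
      obtain ⟨b, hb, hb'⟩ := Pneg _ k (hEk μ hμ.le le_rfl k hk)
      obtain ⟨ha1, ha2⟩ := move_right h1 hj hej ha
      obtain ⟨hb1, hb2⟩ := move_right h1 hj hej hb
      exact ⟨a, b, hdiff k a b ha' hb', ha2, hb2, by simp [ha1, hb1], fun _ => ha1⟩
    · obtain ⟨a, ha, ha'⟩ := Ppos _ (hEc lam h0 h1.le) k
      obtain ⟨b, hb, hb'⟩ := Pneg _ k (hEk lam h0 h1.le k hk)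
      have ha1 : a ∉ J := fun h' => h ⟨a, h', ha⟩
      have hb1 : b ∉ J := fun h' => h ⟨b, h', hb⟩
      exact ⟨a, b, hdiff k a b ha' hb', ha, hb, by simp [ha1, hb1], fun h' => absurd h' h⟩
  have claim1 : ∀ lam : ℝ, 0 < lam → lam < μ → ∀ i, i ∉ K →
      tdot (Wp i) (toT (ξ + lam • eJ J)) = tdot (Wn i) (toT (ξ + lam • eJ J)) → False := by
    intro lam h0 h1 i hi heq
    have hp : ∀ k : Fin m, ∃ a b, k ∈ insert i K → (a ≠ b ∧
      Ed (tmod Wp Wn k) (ξ + lam • eJ J) a ∧ Ed (tmod Wp Wn k) (ξ + lam • eJ J) b) ∧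
      (a ∈ J ↔ b ∈ J) := by
      intro k
      by_cases hk : k ∈ K
      · obtain ⟨a, b, q1, q2, q3, q4, -⟩ := pairK lam h0.le h1 k hk
        exact ⟨a, b, fun _ => ⟨⟨q1, q2, q3⟩, q4⟩⟩
      by_cases hki : k = i
      · subst hki
        obtain ⟨a, ha, ha'⟩ := Ppos _ (hEc lam h0.le h1.le) k
        obtain ⟨b, hb, hb'⟩ := Pneg _ k heq
        by_cases hab : a ∈ J ↔ b ∈ J
        · exact ⟨a, b, fun _ => ⟨⟨hdiff k a b ha' hb', ha, hb⟩, hab⟩⟩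
        by_cases hbJ : b ∈ J
        · obtain ⟨c, hc, hc'⟩ := Ppos _ (hEc μ hμ.le le_rfl) k
          obtain ⟨hc1, hc2⟩ := move_right h1 hbJ hb hc
          exact ⟨c, b, fun _ => ⟨⟨hdiff k c b hc' hb', hc2, hb⟩, by simp [hc1, hbJ]⟩⟩
        · obtain ⟨c, hc, hc'⟩ := Ppos _ (hEc 0 le_rfl hμ.le) k
          obtain ⟨hc1, hc2⟩ := move_left h0 hbJ hb hc
          exact ⟨c, b, fun _ => ⟨⟨hdiff k c b hc' hb', hc2, hb⟩, by simp [hc1, hbJ]⟩⟩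
      · exact ⟨0, 0, fun h => by simp [hk, hki] at h⟩
    choose a b hab using hp
    have := count_one hgen _ (insert i K) a b (fun k hk => (hab k hk).1) (fun j => j ∈ J)
      (fun k hk => (hab k hk).2) {s0, s1} hT
    rw [hTcard, Finset.card_insert_of_notMem hi] at this
    omega
  have hbk : ∀ i ∈ insert ℓ K, tdot (Wp i) (toT ξ) = tdot (Wn i) (toT ξ) :=
    fun i hi => hbasic.1 i hi
  have claim2 : ∀ i, i ∉ insert ℓ K → tdot (Wp i) (toT ξ) = tdot (Wn i) (toT ξ) → False := by
    intro i hi heq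
    have hp : ∀ k : Fin m, ∃ a b, k ∈ insert i (insert ℓ K) → (a ≠ b ∧
      Ed (tmod Wp Wn k) ξ a ∧ Ed (tmod Wp Wn k) ξ b) := by
      intro k
      by_cases hk : k ∈ insert i (insert ℓ K)
      · have he : tdot (Wp k) (toT ξ) = tdot (Wn k) (toT ξ) := by
          rcases Finset.mem_insert.mp hk with rfl | h
          · exact heq
          · exact hbk k h
        obtain ⟨a, ha, ha'⟩ := Ppos ξ hbasic.2 k
        obtain ⟨b, hb, hb'⟩ := Pneg _ k he
        exact ⟨a, b, fun _ => ⟨hdiff k a b ha' hb', ha, hb⟩⟩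
      · exact ⟨0, 0, fun h => absurd h hk⟩
    choose a b hab using hp
    have := count_one hgen _ (insert i (insert ℓ K)) a b (fun k hk => hab k hk) (fun _ => True)
      (fun k hk => Iff.rfl) {s0} (by simp)
    rw [Finset.card_singleton, Finset.card_insert_of_notMem hi,
      Finset.card_insert_of_notMem hℓ] at this
    omega
  have claim3 : ∀ lam : ℝ, 0 ≤ lam → lam < μ → ∀ k ∈ K, ∀ j0 j1, j0 ∈ J → j1 ∉ J →
      Ed (tmod Wp Wn k) (ξ + lam • eJ J) j0 → Ed (tmod Wp Wn k) (ξ + lam • eJ J) j1 → False := by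
    intro lam h0 h1 k hk j0 j1 hj0 hj1 he0 he1
    rcases h0.eq_or_lt with h0 | h0
    · subst h0
      have hp : ∀ k : Fin m, ∃ a b, k ∈ insert ℓ K → (a ≠ b ∧
          Ed (tmod Wp Wn k) (ξ + (0 : ℝ) • eJ J) a ∧
          Ed (tmod Wp Wn k) (ξ + (0 : ℝ) • eJ J) b) ∧
          (k ∈ K → (a ∈ J ↔ b ∈ J) ∧
            ((∃ j ∈ J, Ed (tmod Wp Wn k) (ξ + (0 : ℝ) • eJ J) j) → a ∈ J)) := by
        intro k
        by_cases hk : k ∈ K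
        · obtain ⟨a, b, q1, q2, q3, q4, q5⟩ := pairK 0 le_rfl h1 k hk
          exact ⟨a, b, fun _ => ⟨⟨q1, q2, q3⟩, fun _ => ⟨q4, q5⟩⟩⟩
        by_cases hki : k = ℓ
        · subst hki
          obtain ⟨a, ha, ha'⟩ := Ppos ξ hbasic.2 k
          obtain ⟨b, hb, hb'⟩ := Pneg ξ k (hbk k (Finset.mem_insert_self _ _))
          rw [hz]
          exact ⟨a, b, fun _ => ⟨⟨hdiff k a b ha' hb', ha, hb⟩, fun h => absurd h hk⟩⟩
        · exact ⟨0, 0, fun h => by simp [hk, hki] at h⟩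
      choose a b hab using hp
      obtain ⟨⟨q1, q2, q3⟩, q4⟩ := hab k (Finset.mem_insert_of_mem hk)
      obtain ⟨q4, q5⟩ := q4 hk
      have haJ := q5 ⟨j0, hj0, he0⟩
      have hbJ := q4.mp haJ
      have := count_two hgen _ (insert ℓ K) a b (fun k hk => (hab k hk).1) (fun _ => True)
        (fun k hk => Iff.rfl) {s0} (by simp) k (a k) j1 q2 he1 Iff.rfl
        (fun h => hj1 (h ▸ haJ)) (fun h => hj1 (h ▸ haJ)) (fun h => hj1 (h ▸ hbJ))
      rw [Finset.card_singleton, Finset.card_insert_of_notMem hℓ] at this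
      omega
    · have hp : ∀ k : Fin m, ∃ a b, k ∈ K → (a ≠ b ∧
          Ed (tmod Wp Wn k) (ξ + lam • eJ J) a ∧
          Ed (tmod Wp Wn k) (ξ + lam • eJ J) b) ∧ (a ∈ J ↔ b ∈ J) ∧
            ((∃ j ∈ J, Ed (tmod Wp Wn k) (ξ + lam • eJ J) j) → a ∈ J) := by
        intro k
        by_cases hk : k ∈ K
        · obtain ⟨a, b, q1, q2, q3, q4, q5⟩ := pairK lam h0.le h1 k hk
          exact ⟨a, b, fun _ => ⟨⟨q1, q2, q3⟩, ⟨q4, q5⟩⟩⟩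
        · exact ⟨0, 0, fun h => absurd h hk⟩
      choose a b hab using hp
      obtain ⟨⟨q1, q2, q3⟩, q4, q5⟩ := hab k hk
      have haJ := q5 ⟨j0, hj0, he0⟩
      have hbJ := q4.mp haJ
      obtain ⟨c, hc, hc'⟩ := Ppos _ (hEc 0 le_rfl hμ.le) k
      obtain ⟨d, hd, hd'⟩ := Pneg _ k (hEk 0 le_rfl hμ.le k hk)
      obtain ⟨hc1, hc2⟩ := move_left h0 hj1 he1 hc
      obtain ⟨hd1, hd2⟩ := move_left h0 hj1 he1 hd
      have := count_two hgen _ K a b (fun k hk => (hab k hk).1) (fun j => j ∈ J)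
        (fun k hk => (hab k hk).2.1) {s0, s1} hT k c d hc2 hd2 (by simp [hc1, hd1])
        (hdiff k c d hc' hd') (fun h => hd1 (h ▸ haJ)) (fun h => hd1 (h ▸ hbJ))
      rw [hTcard] at this
      omega
  intro lam h0 h1
  have hyp_iff : ∀ (x : Fin (n + 1) → ℝ) i, isHypNode Wp Wn x i ↔
      tdot (Wp i) (toT x) = tdot (Wn i) (toT x) := by
    intro x i
    refine ⟨fun h => h.1, fun h => ⟨h, ?_⟩⟩
    obtain ⟨j, -, hj⟩ := ex_arg (Wp i) (Wn i) x h.ge (hrow i)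
    obtain ⟨r, hr⟩ := WithBot.ne_bot_iff_exists.mp hj
    refine lt_of_lt_of_le ?_
      (Finset.le_sup (f := fun j => Wp i j + toT x j) (Finset.mem_univ j))
    show ⊥ < Wp i j + ((x j : ℝ) : TT)
    rw [← hr, ← WithBot.coe_add]
    exact WithBot.bot_lt_coe _
  have nodeL : ∀ i, isHypNode Wp Wn (ξ + lam • eJ J) i ↔ i ∈ K := by
    intro i
    rw [hyp_iff]
    refine ⟨fun h => ?_, fun h => hEk lam h0.le h1.le i h⟩
    by_contra hi
    exact claim1 lam h0 h1 i hi h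
  have node0 : ∀ i, isHypNode Wp Wn ξ i ↔ i ∈ insert ℓ K := by
    intro i
    rw [hyp_iff]
    refine ⟨fun h => ?_, fun h => hbk i h⟩
    by_contra hi
    exact claim2 i hi h
  have nodes : ∀ i, isHypNode Wp Wn (ξ + lam • eJ J) i ↔ (isHypNode Wp Wn ξ i ∧ i ≠ ℓ) := by
    intro i
    rw [nodeL, node0, Finset.mem_insert]
    constructor
    · intro h
      exact ⟨Or.inr h, fun h' => hℓ (h' ▸ h)⟩
    · rintro ⟨h | h, h'⟩
      · exact absurd h h'
      · exact h
  have edK : ∀ k ∈ K, ∀ j, Ed (tmod Wp Wn k) (ξ + lam • eJ J) j ↔ Ed (tmod Wp Wn k) ξ j := by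
    intro k hk j
    obtain ⟨j0, hj0, -⟩ := Ppos _ (hEc 0 le_rfl hμ.le) k
    obtain ⟨j1, hj1, -⟩ := Ppos _ (hEc lam h0.le h1.le) k
    have side0 : ∀ a b, Ed (tmod Wp Wn k) (ξ + (0 : ℝ) • eJ J) a →
        Ed (tmod Wp Wn k) (ξ + (0 : ℝ) • eJ J) b → (a ∈ J ↔ b ∈ J) := by
      intro a b ha hb
      refine ⟨fun h => ?_, fun h => ?_⟩ <;> by_contra h'
      · exact claim3 0 le_rfl hμ k hk a b h h' ha hb
      · exact claim3 0 le_rfl hμ k hk b a h h' hb ha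
    have sideL : ∀ a b, Ed (tmod Wp Wn k) (ξ + lam • eJ J) a →
        Ed (tmod Wp Wn k) (ξ + lam • eJ J) b → (a ∈ J ↔ b ∈ J) := by
      intro a b ha hb
      refine ⟨fun h => ?_, fun h => ?_⟩ <;> by_contra h'
      · exact claim3 lam h0.le h1 k hk a b h h' ha hb
      · exact claim3 lam h0.le h1 k hk b a h h' hb ha
    have hcommon : ∃ c, Ed (tmod Wp Wn k) (ξ + (0 : ℝ) • eJ J) c ∧
        Ed (tmod Wp Wn k) (ξ + lam • eJ J) c := by
      by_cases hJ1 : j1 ∈ J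
      · by_cases hJ0 : j0 ∈ J
        · exact ⟨j1, (move_right h0 hJ0 hj0 hj1).2, hj1⟩
        · exfalso
          obtain ⟨d, hd0, hd1, e0, e1⟩ := crossing hJ0 hJ1 hj0 hj1
          exact claim3 d hd0 (by linarith) k hk j1 j0 hJ1 hJ0 e1 e0
      · exact ⟨j0, hj0, (move_left h0 hJ1 hj1 hj0).2⟩
    obtain ⟨c, hc0, hcL⟩ := hcommon
    constructor
    · intro h
      have := Ed.transfer (sideL c j hcL h) hcL h hc0
      rwa [hz] at this
    · intro h
      rw [← hz] at h
      exact Ed.transfer (side0 c j hc0 h) hc0 h hcL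
  have edges : ∀ i j, isTEdge Wp Wn (ξ + lam • eJ J) i j ↔ (isTEdge Wp Wn ξ i j ∧ i ≠ ℓ) := by
    intro i j
    unfold isTEdge
    rw [tdot_eq_iff (tmod Wp Wn i) _ (hrow i), tdot_eq_iff (tmod Wp Wn i) _ (hrow i), nodes i]
    constructor
    · rintro ⟨⟨h2, h3⟩, h4⟩
      have hiK : i ∈ K := (nodeL i).mp ((nodes i).mpr ⟨h2, h3⟩)
      exact ⟨⟨h2, (edK i hiK j).mp h4⟩, h3⟩
    · rintro ⟨⟨h2, h4⟩, h3⟩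
      have hiK : i ∈ K := (nodeL i).mp ((nodes i).mpr ⟨h2, h3⟩)
      exact ⟨⟨h2, h3⟩, (edK i hiK j).mpr h4⟩
  refine ⟨nodes, ?_⟩
  rintro (i | j) (i' | j')
  · simp [arcRel]
  · simp only [arcRel, edges, ne_eq, Sum.inl.injEq, reduceCtorEq, not_false_eq_true, and_true]
    tauto
  · simp only [arcRel, edges, ne_eq, Sum.inl.injEq, reduceCtorEq, not_false_eq_true, true_and]
    tauto
  · simp [arcRel]
end
end
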